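/- Hecke-type converse theorem. Let k be a negative integer and N a positive integer. Let f, g : ℍ → ℂ be given by the Fourier series f(τ) = Σ_{n=0}^∞ c_f⁺(n)q^n + c_f⁻(0)v^{1−k} + Σ_{n<0} c_f⁻(n)Γ(1−k,−4πnv)q^n and likewise g, with coefficients c_f^±(n), c_g^±(n) = O(|n|^α) for some α ≥ 0. Then the following are equivalent. (1) g = f|_k ω(N). (2) Each of Λ_N(f,s), Λ_N(g,s), Ω_N(f,s), Ω_N(g,s) admits a meromorphic continuation to all of ℂ, the functional equations Λ_N(f,s) = i^k Λ_N(g, k−s) and Ω_N(f,s) = −i^k Ω_N(g, k−s) hold, and each of the pole-corrected functions Λ*_N(f,s), Λ*_N(g,s), Ω*_N(f,s), Ω*_N(g,s) is entire and bounded in vertical strips. -/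

import Mathlib

open Complex MeasureTheory Set Filter

noncomputable section

/-- The upper half-plane, as a subset of `ℂ`. -/
def UHP : Set ℂ := {τ : ℂ | 0 < τ.im}

/-- The weight-`k` slash operator for the matrix `(a b; c d)` (assumed of positive
determinant): `(f|_k γ)(τ) = (det γ)^(k/2) (cτ+d)^(-k) f((aτ+b)/(cτ+d))`. -/
def slash (k : ℤ) (a b c d : ℂ) (f : ℂ → ℂ) : ℂ → ℂ := fun τ =>
  (a * d - b * c) ^ ((k : ℂ) / 2) * (c * τ + d) ^ (-k) * f ((a * τ + b) / (c * τ + d))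

/-- The Fricke involution `f ↦ f|_k ω(M)` with `ω(M) = (0 -1; M 0)`. -/
def fricke (k : ℤ) (M : ℕ) (f : ℂ → ℂ) : ℂ → ℂ := slash k 0 (-1) (M : ℂ) 0 f

/-- Partial derivative in the real (`u`) direction. -/
def pdU (f : ℂ → ℂ) (τ : ℂ) : ℂ := fderiv ℝ f τ 1

/-- Partial derivative in the imaginary (`v`) direction. -/
def pdV (f : ℂ → ℂ) (τ : ℂ) : ℂ := fderiv ℝ f τ Complex.I

/-- Wirtinger derivative `∂/∂τ`. -/
def wirt (f : ℂ → ℂ) (τ : ℂ) : ℂ := (pdU f τ - Complex.I * pdV f τ) / 2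

/-- Wirtinger derivative `∂/∂τ̄`. -/
def wirtBar (f : ℂ → ℂ) (τ : ℂ) : ℂ := (pdU f τ + Complex.I * pdV f τ) / 2

/-- The weight-`k` hyperbolic Laplacian
`Δ_k = -v²(∂²/∂u² + ∂²/∂v²) + ikv(∂/∂u + i ∂/∂v)`. -/
def hypLaplacian (k : ℤ) (f : ℂ → ℂ) (τ : ℂ) : ℂ :=
  -(τ.im : ℂ) ^ 2 * (pdU (pdU f) τ + pdV (pdV f) τ)
    + Complex.I * (k : ℂ) * (τ.im : ℂ) * (pdU f τ + Complex.I * pdV f τ)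

/-- Maass raising operator `R_k = 2i ∂/∂τ + k/v`. -/
def Rop (k : ℤ) (f : ℂ → ℂ) (τ : ℂ) : ℂ :=
  2 * Complex.I * wirt f τ + (k : ℂ) / (τ.im : ℂ) * f τ

/-- Maass lowering operator `L_k = -2iv² ∂/∂τ̄`. -/
def Lop (f : ℂ → ℂ) (τ : ℂ) : ℂ := -2 * Complex.I * (τ.im : ℂ) ^ 2 * wirtBar f τ

/-- Shadow operator `ξ_k f = 2i v^k conj(∂f/∂τ̄)`. -/
def xiOp (k : ℤ) (f : ℂ → ℂ) (τ : ℂ) : ℂ :=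
  2 * Complex.I * (τ.im : ℂ) ^ k * (starRingEnd ℂ) (wirtBar f τ)

/-- The operator `D = (1/(2πi)) ∂/∂τ`. -/
def Dop (f : ℂ → ℂ) : ℂ → ℂ := fun τ => wirt f τ / (2 * Real.pi * Complex.I)

/-- Modularity: `f|_k γ = χ(d) f` for all `γ = (a b; c d) ∈ Γ₀(N)`. -/
def SlashInv (k : ℤ) (N : ℕ) (χ : DirichletCharacter ℂ N) (f : ℂ → ℂ) : Prop :=
  ∀ a b c d : ℤ, a * d - b * c = 1 → (N : ℤ) ∣ c → ∀ τ ∈ UHP,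
    slash k (a : ℂ) (b : ℂ) (c : ℂ) (d : ℂ) f τ = χ (d : ZMod N) * f τ

/-- At every cusp, `f|_k γ` grows at most linear-exponentially:
`(f|_k γ)(τ) = O(e^(εv))` as `v → ∞`. -/
def ExpGrowthAtCusps (k : ℤ) (f : ℂ → ℂ) : Prop :=
  ∀ a b c d : ℤ, a * d - b * c = 1 →
    ∃ ε > (0 : ℝ), ∃ C v₀ : ℝ, ∀ τ ∈ UHP, v₀ ≤ τ.im →
      ‖slash k (a : ℂ) (b : ℂ) (c : ℂ) (d : ℂ) f τ‖ ≤ C * Real.exp (ε * τ.im)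

/-- At every cusp, `f|_k γ` has at most polynomial growth as `v → ∞`. -/
def PolyGrowthAtCusps (k : ℤ) (f : ℂ → ℂ) : Prop :=
  ∀ a b c d : ℤ, a * d - b * c = 1 →
    ∃ A C v₀ : ℝ, ∀ τ ∈ UHP, v₀ ≤ τ.im →
      ‖slash k (a : ℂ) (b : ℂ) (c : ℂ) (d : ℂ) f τ‖ ≤ C * τ.im ^ A

/-- At every cusp, `f|_k γ` stays bounded as `v → ∞`. -/
def BoundedAtCusps (k : ℤ) (f : ℂ → ℂ) : Prop :=
  ∀ a b c d : ℤ, a * d - b * c = 1 →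
    ∃ C v₀ : ℝ, ∀ τ ∈ UHP, v₀ ≤ τ.im →
      ‖slash k (a : ℂ) (b : ℂ) (c : ℂ) (d : ℂ) f τ‖ ≤ C

/-- Harmonic Maass forms of manageable growth: the space `H^!_k(N,χ)`. -/
def IsHarmonicMaassMG (k : ℤ) (N : ℕ) (χ : DirichletCharacter ℂ N) (f : ℂ → ℂ) : Prop :=
  ContDiffOn ℝ (⊤ : ℕ∞) f UHP ∧ SlashInv k N χ f ∧ (∀ τ ∈ UHP, hypLaplacian k f τ = 0) ∧
    ExpGrowthAtCusps k f

/-- Harmonic Maass forms of polynomial growth: the space `H^#_k(N,χ)`. -/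
def IsHMFPolyGrowth (k : ℤ) (N : ℕ) (χ : DirichletCharacter ℂ N) (f : ℂ → ℂ) : Prop :=
  IsHarmonicMaassMG k N χ f ∧ PolyGrowthAtCusps k f

/-- Holomorphic modular forms of weight `k`: the space `M_k(N,χ)`. -/
def IsHolomorphicModularForm (k : ℤ) (N : ℕ) (χ : DirichletCharacter ℂ N) (f : ℂ → ℂ) : Prop :=
  DifferentiableOn ℂ f UHP ∧ SlashInv k N χ f ∧ BoundedAtCusps k f

/-- The (real) incomplete gamma function `Γ(ν, x) = ∫_x^∞ e^(-t) t^(ν-1) dt`. -/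
def incGamma (ν : ℝ) (x : ℝ) : ℝ := ∫ t in Ioi x, Real.exp (-t) * t ^ (ν - 1)

/-- The series `Σ_{n≥0} c⁺(n) qⁿ + c⁻(0) v^(1-k) + Σ_{n<0} c⁻(n) Γ(1-k, -4πnv) qⁿ`,
with `cm j` standing for `c⁻(-j)`. -/
def maassSeries (k : ℤ) (cp cm : ℕ → ℂ) : ℂ → ℂ := fun τ =>
  (∑' n : ℕ, cp n * Complex.exp (2 * Real.pi * Complex.I * n * τ))
    + cm 0 * (τ.im : ℂ) ^ (1 - k)
    + ∑' n : ℕ, cm (n + 1) * (incGamma ((1 - k : ℤ) : ℝ) (4 * Real.pi * (n + 1) * τ.im) : ℂ)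
        * Complex.exp (-(2 * Real.pi * Complex.I * (n + 1) * τ))

/-- `f` is given on `ℍ` by the harmonic-Maass-type Fourier series with
holomorphic-part coefficients `cp n = c⁺(n)` and nonholomorphic-part
coefficients `cm n = c⁻(-n)`. -/
def FourierShape (k : ℤ) (cp cm : ℕ → ℂ) (f : ℂ → ℂ) : Prop :=
  ∀ τ ∈ UHP, f τ = maassSeries k cp cm τ

/-- Coefficients bounded by `O(n^α)`. -/
def CoeffBound (α : ℝ) (c : ℕ → ℂ) : Prop :=
  ∃ C : ℝ, ∀ n : ℕ, 1 ≤ n → ‖c n‖ ≤ C * (n : ℝ) ^ α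

/-- Dirichlet series `Σ_{n≥1} c(n) n^(-s)`. -/
def LSer (c : ℕ → ℂ) (s : ℂ) : ℂ := ∑' n : ℕ, c (n + 1) / ((n : ℂ) + 1) ^ s

/-- `W_ν(s) = ∫₀^∞ Γ(ν,2x) eˣ x^(s-1) dx`. -/
def Wnu (ν : ℝ) (s : ℂ) : ℂ :=
  ∫ x in Ioi (0 : ℝ), ((incGamma ν (2 * x) * Real.exp x : ℝ) : ℂ) * (x : ℂ) ^ (s - 1)

/-- Completed `L`-function `Λ_N(f,s)` (with twisting conductor `m`; `m = 1` is
the untwisted case): `(m√N/(2π))^s [Γ(s) L⁺(s) + W_{1-k}(s) L⁻(s)]`. -/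
def LambdaN (N : ℕ) (k : ℤ) (m : ℕ) (cp cm : ℕ → ℂ) (s : ℂ) : ℂ :=
  ((m * Real.sqrt N / (2 * Real.pi) : ℝ) : ℂ) ^ s *
    (Complex.Gamma s * LSer cp s + Wnu ((1 - k : ℤ) : ℝ) s * LSer cm s)

/-- `Ξ_N(f,s) = (m√N/(2π))^s [Γ(s+1) L⁺(s) - W_{1-k}(s+1) L⁻(s)]`. -/
def XiN (N : ℕ) (k : ℤ) (m : ℕ) (cp cm : ℕ → ℂ) (s : ℂ) : ℂ :=
  ((m * Real.sqrt N / (2 * Real.pi) : ℝ) : ℂ) ^ s *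
    (Complex.Gamma (s + 1) * LSer cp s - Wnu ((1 - k : ℤ) : ℝ) (s + 1) * LSer cm s)

/-- `Ω_N(f,s) = -2 Ξ_N(f,s) + k Λ_N(f,s)`. -/
def OmegaN (N : ℕ) (k : ℤ) (m : ℕ) (cp cm : ℕ → ℂ) (s : ℂ) : ℂ :=
  -2 * XiN N k m cp cm s + (k : ℂ) * LambdaN N k m cp cm s

/-- Bounded on every vertical strip. -/
def BoundedVert (F : ℂ → ℂ) : Prop :=
  ∀ a b : ℝ, ∃ M : ℝ, ∀ s : ℂ, a ≤ s.re → s.re ≤ b → ‖F s‖ ≤ M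

/-- `N^((1-k)/2)` as a complex number. -/
def Npow (N : ℕ) (k : ℤ) : ℂ := (N : ℂ) ^ ((1 - (k : ℂ)) / 2)

/-- Pole-correction terms for `Λ*`. -/
def corrL (N : ℕ) (k : ℤ) (ι c0 d0 c0' d0' : ℂ) (s : ℂ) : ℂ :=
  c0 / s + ι * d0 / ((k : ℂ) - s) + c0' / Npow N k / (s - (k : ℂ) + 1)
    + ι * d0' / Npow N k / (1 - s)

/-- Pole-correction terms for `Ω*`. -/
def corrO (N : ℕ) (k : ℤ) (ι c0 d0 c0' d0' : ℂ) (s : ℂ) : ℂ :=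
  (k : ℂ) * (c0 / s - ι * d0 / ((k : ℂ) - s) + c0' / Npow N k / (s - (k : ℂ) + 1)
    - ι * d0' / Npow N k / (1 - s))

/-- The pole-corrected function `L + corr` agrees away from `{0, k, 1, k-1}` with an
entire function that is bounded on vertical strips. -/
def EntireBddCorrected (k : ℤ) (L corr : ℂ → ℂ) : Prop :=
  ∃ F : ℂ → ℂ, Differentiable ℂ F ∧ BoundedVert F ∧
    ∀ s : ℂ, s ≠ 0 → s ≠ (k : ℂ) → s ≠ 1 → s ≠ (k : ℂ) - 1 → F s = L s + corr s

/-- Condition (2)(a) of the main theorem: meromorphic continuation, functional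
equations, and entire pole-corrected completions bounded on vertical strips. -/
def AnalyticPackage (N : ℕ) (k : ℤ) (α : ℝ) (cfp cfm cgp cgm : ℕ → ℂ) : Prop :=
  ∃ Lf Lg Of' Og : ℂ → ℂ,
    (∀ s : ℂ, α + 1 < s.re → Lf s = LambdaN N k 1 cfp cfm s) ∧
    (∀ s : ℂ, α + 1 < s.re → Lg s = LambdaN N k 1 cgp cgm s) ∧
    (∀ s : ℂ, α + 1 < s.re → Of' s = OmegaN N k 1 cfp cfm s) ∧
    (∀ s : ℂ, α + 1 < s.re → Og s = OmegaN N k 1 cgp cgm s) ∧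
    (∀ s : ℂ, Lf s = Complex.I ^ k * Lg ((k : ℂ) - s)) ∧
    (∀ s : ℂ, Of' s = -(Complex.I ^ k) * Og ((k : ℂ) - s)) ∧
    EntireBddCorrected k Lf (corrL N k (Complex.I ^ k) (cfp 0) (cgp 0) (cfm 0) (cgm 0)) ∧
    EntireBddCorrected k Lg (corrL N k (Complex.I ^ (-k)) (cgp 0) (cfp 0) (cgm 0) (cfm 0)) ∧
    EntireBddCorrected k Of' (corrO N k (Complex.I ^ k) (cfp 0) (cgp 0) (cfm 0) (cgm 0)) ∧
    EntireBddCorrected k Og (corrO N k (Complex.I ^ (-k)) (cgp 0) (cfp 0) (cgm 0) (cfm 0))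

/-- The complex conjugate of a Dirichlet character. -/
def conjChar {N : ℕ} (χ : DirichletCharacter ℂ N) : DirichletCharacter ℂ N :=
  χ.ringHomComp (starRingEnd ℂ)

/-- Twist of a coefficient sequence by a Dirichlet character. -/
def twistC {m : ℕ} (ψ : DirichletCharacter ℂ m) (c : ℕ → ℂ) : ℕ → ℂ :=
  fun n => ψ (n : ZMod m) * c n

/-- The twisted Fourier series `f_ψ`. -/
def twistFn (k : ℤ) {m : ℕ} (ψ : DirichletCharacter ℂ m) (cp cm : ℕ → ℂ) : ℂ → ℂ :=
  maassSeries k (twistC ψ cp) (twistC ψ cm)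

/-- The Gauss sum `τ(ψ) = Σ_{a=0}^{m-1} ψ(a) e^(2πia/m)`. -/
def gSum (m : ℕ) (ψ : DirichletCharacter ℂ m) : ℂ :=
  ∑ a ∈ Finset.range m, ψ (a : ZMod m) * Complex.exp (2 * Real.pi * Complex.I * a / m)

/-- The analytic package for the `ψ`-twisted completed Dirichlet series: entire
continuations, bounded on vertical strips, with functional equations with
constant `Cψ`. -/
def TwistedPackage (N : ℕ) (k : ℤ) (α : ℝ) (m : ℕ) (ψ : DirichletCharacter ℂ m)
    (cfp cfm cgp cgm : ℕ → ℂ) (Cψ : ℂ) : Prop :=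
  ∃ Lf Lg Of' Og : ℂ → ℂ,
    (∀ s : ℂ, α + 1 < s.re → Lf s = LambdaN N k m (twistC ψ cfp) (twistC ψ cfm) s) ∧
    (∀ s : ℂ, α + 1 < s.re →
      Lg s = LambdaN N k m (twistC (conjChar ψ) cgp) (twistC (conjChar ψ) cgm) s) ∧
    (∀ s : ℂ, α + 1 < s.re → Of' s = OmegaN N k m (twistC ψ cfp) (twistC ψ cfm) s) ∧
    (∀ s : ℂ, α + 1 < s.re →
      Og s = OmegaN N k m (twistC (conjChar ψ) cgp) (twistC (conjChar ψ) cgm) s) ∧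
    Differentiable ℂ Lf ∧ Differentiable ℂ Lg ∧ Differentiable ℂ Of' ∧ Differentiable ℂ Og ∧
    BoundedVert Lf ∧ BoundedVert Lg ∧ BoundedVert Of' ∧ BoundedVert Og ∧
    (∀ s : ℂ, Lf s = Complex.I ^ k * Cψ * Lg ((k : ℂ) - s)) ∧
    (∀ s : ℂ, Of' s = -(Complex.I ^ k) * Cψ * Og ((k : ℂ) - s))

abbrev SL2Z := Matrix.SpecialLinearGroup (Fin 2) ℤ

/-- Entry of a matrix in `SL₂(ℤ)`. -/
def mEntry (g : SL2Z) (i j : Fin 2) : ℤ := (g : Matrix (Fin 2) (Fin 2) ℤ) i j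

/-- Slash by a matrix in `SL₂(ℤ)`. -/
def slashM (k : ℤ) (g : SL2Z) (f : ℂ → ℂ) : ℂ → ℂ :=
  slash k (mEntry g 0 0 : ℂ) (mEntry g 0 1 : ℂ) (mEntry g 1 0 : ℂ) (mEntry g 1 1 : ℂ) f

/-- `Γ₀(N)` as a subset of `SL₂(ℤ)`. -/
def Gamma0Set (N : ℕ) : Set SL2Z := {g | (N : ℤ) ∣ mEntry g 1 0}

/-- `Γ_∞`, the stabiliser of `i∞` in `SL₂(ℤ)`. -/
def GammaInfSet : Set SL2Z := {g | mEntry g 1 0 = 0}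

/-- `Γ_ρ = Γ₀(N) ∩ γ_ρ Γ_∞ γ_ρ⁻¹` for the cusp `ρ = γ_ρ(i∞)`. -/
def GammaCusp (N : ℕ) (γρ : SL2Z) : Set SL2Z :=
  {g | g ∈ Gamma0Set N ∧ γρ⁻¹ * g * γρ ∈ GammaInfSet}

/-- `R` is a complete set of representatives for `Γ_ρ \ Γ₀(N)`. -/
def IsCosetReps (N : ℕ) (γρ : SL2Z) (R : Set SL2Z) : Prop :=
  R ⊆ Gamma0Set N ∧
    ∀ g ∈ Gamma0Set N, ∃! r : SL2Z, r ∈ R ∧ ∃ γ ∈ GammaCusp N γρ, g = γ * r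

/-- `χ(g) := χ(d)` for `g = (a b; c d)`. -/
def chiOf {N : ℕ} (χ : DirichletCharacter ℂ N) (g : SL2Z) : ℂ :=
  χ ((mEntry g 1 1 : ℤ) : ZMod N)

/-- The preimage `𝓕_{k,ρ}(N,χ;τ) = Σ_{g ∈ Γ_ρ\Γ₀(N)} χ̄(g) (v^(1-k)/(1-k))|_k γ_ρ⁻¹ g`,
computed using a set `R` of coset representatives. -/
def FEis (k : ℤ) (N : ℕ) (χ : DirichletCharacter ℂ N) (γρ : SL2Z) (R : Set SL2Z) : ℂ → ℂ :=
  fun τ => ∑' r : R, (starRingEnd ℂ) (chiOf χ (r : SL2Z)) *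
    slashM k (γρ⁻¹ * (r : SL2Z)) (fun z => (z.im : ℂ) ^ (1 - k) / ((1 : ℂ) - (k : ℂ))) τ

/-- The Eisenstein series `E_{2-k,ρ}(N,χ;τ) = Σ_{g ∈ Γ_ρ\Γ₀(N)} χ̄(g) j(γ_ρ⁻¹g, τ)^(k-2)`,
computed using a set `R` of coset representatives. -/
def EisSeries (k : ℤ) (N : ℕ) (χ : DirichletCharacter ℂ N) (γρ : SL2Z) (R : Set SL2Z) :
    ℂ → ℂ := fun τ => ∑' r : R, (starRingEnd ℂ) (chiOf χ (r : SL2Z)) *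
      ((mEntry (γρ⁻¹ * (r : SL2Z)) 1 0 : ℂ) * τ + (mEntry (γρ⁻¹ * (r : SL2Z)) 1 1 : ℂ)) ^ (k - 2)

/-- Two cusps `γν(i∞)` and `γρ(i∞)` are `Γ₀(N)`-equivalent. -/
def CuspEquiv (N : ℕ) (γν γρ : SL2Z) : Prop :=
  ∃ g ∈ Gamma0Set N, ∃ h ∈ GammaInfSet, γν = g * γρ * h

/-!
Along the imaginary axis `g = f|_k ω(N)` becomes an inversion formula `A t = ε t^(-k) B t⁻¹`, and
Mellin transforms along the axis turn the values of `f` into `Λ_N(f,s)` and those of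
`2τ ∂f/∂u + k f` into `Ω_N(f,s)`. For a single pair `(A, B)`, inversion is equivalent to
continuation with functional equation. In one direction split the Mellin integral at `t = 1`. In the
other, the Mellin transforms over `t < 1` and over `t > 1` of the defect `A t - ε t^(-k) B t⁻¹` are,
up to sign, one entire function; it is bounded on two half planes and on the strip between them,
hence constant by Liouville's theorem, and a function on `(0, 1]` with constant Mellin transform
vanishes. Finally, the two axis conditions give back the identity on `ℍ`: the shadow of
`g - f|_k ω(N)` is holomorphic, so a vanishing value and `u`-derivative on the axis force first the
shadow and then the difference to vanish.
-/

open Topology Asymptotics ComplexConjugate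

section Mellin

variable {f g : ℝ → ℂ} {s m n : ℂ}

lemma hasMellin_add' (hf : HasMellin f s m) (hg : HasMellin g s n) :
    HasMellin (fun t => f t + g t) s (m + n) :=
  hf.2 ▸ hg.2 ▸ hasMellin_add hf.1 hg.1

lemma hasMellin_sub' (hf : HasMellin f s m) (hg : HasMellin g s n) :
    HasMellin (fun t => f t - g t) s (m - n) :=
  hf.2 ▸ hg.2 ▸ hasMellin_sub hf.1 hg.1

lemma hasMellin_const_mul (hf : HasMellin f s m) (c : ℂ) :
    HasMellin (fun t => c * f t) s (c * m) :=
  hf.2 ▸ hasMellin_const_smul hf.1 c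

lemma hasMellin_sum {ι : Type*} (S : Finset ι) {f : ι → ℝ → ℂ} {m : ι → ℂ}
    (hf : ∀ i ∈ S, HasMellin (f i) s (m i)) :
    HasMellin (fun t => ∑ i ∈ S, f i t) s (∑ i ∈ S, m i) := by
  classical
  induction S using Finset.induction_on with
  | empty => simp [HasMellin, MellinConvergent, mellin, IntegrableOn]
  | insert i S hi ih =>
    simp only [Finset.sum_insert hi]
    exact hasMellin_add' (hf i (Finset.mem_insert_self i S))
      (ih fun j hj => hf j (Finset.mem_insert_of_mem hj))

lemma hasMellin_cpow_mul {a : ℂ} (hf : HasMellin f (s + a) m) :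
    HasMellin (fun t : ℝ => (t : ℂ) ^ a * f t) s m :=
  ⟨MellinConvergent.cpow_smul.2 hf.1, (mellin_cpow_smul f s a).trans hf.2⟩

lemma hasMellin_comp_inv (hf : HasMellin f (-s) m) : HasMellin (fun t => f t⁻¹) s m := by
  refine ⟨?_, (mellin_comp_inv f s).trans hf.2⟩
  have h := (MellinConvergent.comp_rpow (f := f) (s := s) (a := -1) (by norm_num)).2
    (by simpa [div_neg] using hf.1)
  simpa only [Real.rpow_neg_one] using h

lemma hasMellin_comp_mul_left {y : ℝ} (hy : 0 < y) (hf : HasMellin f s m) :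
    HasMellin (fun t => f (y * t)) s ((y : ℂ) ^ (-s) * m) :=
  ⟨(MellinConvergent.comp_mul_left hy).2 hf.1, by
    rw [mellin_comp_mul_left f s hy, hf.2, smul_eq_mul]⟩

lemma hasMellin_congr_ae (hfg : f =ᵐ[volume.restrict (Ioi 0)] g) (hg : HasMellin g s m) :
    HasMellin f s m := by
  have h : (fun t : ℝ => (t : ℂ) ^ (s - 1) • f t) =ᵐ[volume.restrict (Ioi 0)]
      fun t : ℝ => (t : ℂ) ^ (s - 1) • g t := by
    filter_upwards [hfg] with t ht
    rw [ht]
  exact ⟨hg.1.congr h.symm, (integral_congr_ae h).trans hg.2⟩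

lemma norm_mellin_le_of_forall_norm_cpow_le {x : ℂ} (hx : MellinConvergent f x)
    (h : ∀ t ∈ Ioi (0 : ℝ), f t ≠ 0 → ‖(t : ℂ) ^ (s - 1)‖ ≤ ‖(t : ℂ) ^ (x - 1)‖) :
    ‖mellin f s‖ ≤ ∫ t in Ioi (0 : ℝ), ‖(t : ℂ) ^ (x - 1) • f t‖ := by
  refine norm_integral_le_of_norm_le hx.norm ?_
  filter_upwards [ae_restrict_mem measurableSet_Ioi] with t ht
  rw [norm_smul, norm_smul]
  by_cases hft : f t = 0
  · simp [hft]
  · gcongr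
    exact h t ht hft

/-- The functions `(1 - t) f(t)` and `0` have the same Mellin transform as soon as that of `f` is
constant, so uniqueness reduces to Mellin inversion at the integrable transform `0`. -/
lemma eq_zero_of_hasMellin_const {σ : ℝ} {C : ℂ} (hf : ∀ s : ℂ, σ < s.re → HasMellin f s C)
    {x : ℝ} (hx : 0 < x) (hx1 : x ≠ 1) (hcont : ContinuousAt f x) : f x = 0 := by
  let h : ℝ → ℂ := fun t => f t - (t : ℂ) ^ (1 : ℂ) * f t
  have hmellin : ∀ s : ℂ, σ < s.re → HasMellin h s 0 := fun s hs =>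
    sub_self C ▸ hasMellin_sub' (hf s hs) (hasMellin_cpow_mul (hf (s + 1) (by simp; linarith)))
  have hzero : ∀ y : ℝ, mellin h (((σ + 1 : ℝ) : ℂ) + y * I) = 0 := fun y =>
    (hmellin _ (by simp)).2
  have hconth : ContinuousAt h x := by
    simp only [h, cpow_one]
    fun_prop
  have hinv := mellinInv_mellin_eq (σ + 1) h hx (hmellin _ (by simp)).1
    (by simp only [VerticalIntegrable, hzero]; exact integrable_zero _ _ _) hconth
  simp only [mellinInv, hzero, smul_zero, integral_zero] at hinv
  have hhx : (1 - (x : ℂ)) * f x = 0 := by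
    simpa only [sub_mul, one_mul, h, cpow_one] using hinv.symm
  exact (mul_eq_zero.1 hhx).resolve_left (sub_ne_zero.2 (by exact_mod_cast hx1.symm))

end Mellin

namespace BoundedVert

variable {F G : ℂ → ℂ}

lemma add (hF : BoundedVert F) (hG : BoundedVert G) : BoundedVert fun s => F s + G s := by
  intro x y
  obtain ⟨M, hM⟩ := hF x y
  obtain ⟨M', hM'⟩ := hG x y
  exact ⟨M + M', fun s hx hy => norm_add_le_of_le (hM s hx hy) (hM' s hx hy)⟩

lemma const_mul (hF : BoundedVert F) (c : ℂ) : BoundedVert fun s => c * F s := by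
  intro x y
  obtain ⟨M, hM⟩ := hF x y
  refine ⟨‖c‖ * M, fun s hx hy => ?_⟩
  rw [norm_mul]
  gcongr
  exact hM s hx hy

lemma comp_const_sub (hF : BoundedVert F) (k : ℂ) : BoundedVert fun s => F (k - s) := by
  intro x y
  obtain ⟨M, hM⟩ := hF (k.re - y) (k.re - x)
  exact ⟨M, fun s hx hy => hM _ (by simp; linarith) (by simp; linarith)⟩

lemma exists_eq_const (hF : BoundedVert F) (hd : Differentiable ℂ F) {x y : ℝ}
    (hleft : ∃ M : ℝ, ∀ s : ℂ, s.re ≤ x → ‖F s‖ ≤ M)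
    (hright : ∃ M : ℝ, ∀ s : ℂ, y ≤ s.re → ‖F s‖ ≤ M) : ∃ C, ∀ s, F s = C := by
  obtain ⟨M₁, h₁⟩ := hleft
  obtain ⟨M₂, h₂⟩ := hright
  obtain ⟨M₃, h₃⟩ := hF x y
  refine hd.exists_const_forall_eq_of_bounded (isBounded_iff_forall_norm_le.2
    ⟨max M₁ (max M₂ M₃), forall_mem_range.2 fun s => ?_⟩)
  rcases le_total s.re x with hx | hx
  · exact (h₁ s hx).trans (le_max_left _ _)
  rcases le_total y s.re with hy | hy
  · exact (h₂ s hy).trans ((le_max_left _ _).trans (le_max_right _ _))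
  · exact (h₃ s hx hy).trans ((le_max_right _ _).trans (le_max_right _ _))

end BoundedVert

/-- Continuous functions on `(0, ∞)` that are `O(t ^ (-β))` on all of `(0, ∞)` for every `β > σ`:
moderate growth at `0`, rapid decay at `∞`. Their Mellin transform converges for `σ < re s`. -/
structure MellinTail (σ : ℝ) (a : ℝ → ℂ) : Prop where
  continuousOn : ContinuousOn a (Ioi 0)
  isBigO_rpow : ∀ β > σ, a =O[𝓟 (Ioi 0)] fun t : ℝ => t ^ (-β)

/-- The truncation of a function to `(1, ∞)`. -/
def truncOne (a : ℝ → ℂ) : ℝ → ℂ := indicator (Ioi 1) a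

namespace MellinTail

variable {σ : ℝ} {a b : ℝ → ℂ}

lemma add (ha : MellinTail σ a) (hb : MellinTail σ b) : MellinTail σ fun t => a t + b t :=
  ⟨ha.1.add hb.1, fun β hβ => (ha.2 β hβ).add (hb.2 β hβ)⟩

lemma const_mul (ha : MellinTail σ a) (c : ℂ) : MellinTail σ fun t => c * a t :=
  ⟨continuousOn_const.mul ha.1, fun β hβ => (ha.2 β hβ).const_mul_left c⟩

lemma sum {ι : Type*} (S : Finset ι) {a : ι → ℝ → ℂ} (ha : ∀ i ∈ S, MellinTail σ (a i)) :
    MellinTail σ fun t => ∑ i ∈ S, a i t :=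
  ⟨continuousOn_finsetSum S fun i hi => (ha i hi).1,
    fun β hβ => IsBigO.fun_sum fun i hi => (ha i hi).2 β hβ⟩

lemma comp_mul_left (ha : MellinTail σ a) {y : ℝ} (hy : 0 < y) :
    MellinTail σ fun t => a (y * t) := by
  have hmaps : MapsTo (fun t : ℝ => y * t) (Ioi 0) (Ioi 0) := fun t ht => mul_pos hy ht
  refine ⟨ha.1.comp (by fun_prop) hmaps, fun β hβ => ?_⟩
  refine ((ha.2 β hβ).comp_tendsto (tendsto_principal_principal.2 hmaps)).trans
    (IsBigO.of_bound (y ^ (-β)) (eventually_principal.2 fun t ht => ?_))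
  rw [Function.comp_apply, Real.mul_rpow hy.le (le_of_lt ht), norm_mul,
    Real.norm_of_nonneg (Real.rpow_nonneg hy.le _)]

lemma mellinConvergent (ha : MellinTail σ a) {s : ℂ} (hs : σ < s.re) : MellinConvergent a s :=
  mellinConvergent_of_isBigO_rpow (a := s.re + 1) (b := (σ + s.re) / 2)
    (ha.1.locallyIntegrableOn measurableSet_Ioi)
    ((ha.2 _ (by linarith)).mono (le_principal_iff.2 (Ioi_mem_atTop 0))) (by linarith)
    ((ha.2 _ (by linarith)).mono (le_principal_iff.2 self_mem_nhdsWithin)) (by linarith)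

lemma locallyIntegrableOn_truncOne (ha : MellinTail σ a) :
    LocallyIntegrableOn (truncOne a) (Ioi 0) := by
  have h := ha.1.locallyIntegrableOn (μ := volume) measurableSet_Ioi
  rw [locallyIntegrableOn_iff isOpen_Ioi.isLocallyClosed] at h ⊢
  exact fun K hK hKc => (h K hK hKc).indicator measurableSet_Ioi

lemma truncOne_isBigO_atTop (ha : MellinTail σ a) {β : ℝ} (hβ : σ < β) :
    truncOne a =O[atTop] fun t : ℝ => t ^ (-β) := by
  refine IsBigO.congr' ((ha.2 β hβ).mono (le_principal_iff.2 (Ioi_mem_atTop 0))) ?_ .rfl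
  filter_upwards [Ioi_mem_atTop 1] with t ht
  rw [truncOne, indicator_of_mem ht]

lemma truncOne_isBigO_nhdsGT (a : ℝ → ℂ) (β : ℝ) :
    truncOne a =O[𝓝[>] 0] fun t : ℝ => t ^ (-β) := by
  refine EventuallyEq.trans_isBigO ?_ (isBigO_zero _ _)
  filter_upwards [Ioo_mem_nhdsGT (zero_lt_one (α := ℝ))] with t ht
  exact indicator_of_notMem (not_lt.2 ht.2.le) a

lemma mellinConvergent_truncOne (ha : MellinTail σ a) (s : ℂ) :
    MellinConvergent (truncOne a) s :=
  mellinConvergent_of_isBigO_rpow (a := max σ s.re + 1) (b := s.re - 1)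
    ha.locallyIntegrableOn_truncOne
    (ha.truncOne_isBigO_atTop (by linarith [le_max_left σ s.re]))
    (by linarith [le_max_right σ s.re]) (truncOne_isBigO_nhdsGT a _) (by linarith)

lemma differentiable_mellin_truncOne (ha : MellinTail σ a) :
    Differentiable ℂ (mellin (truncOne a)) := fun s =>
  mellin_differentiableAt_of_isBigO_rpow (a := max σ s.re + 1) (b := s.re - 1)
    ha.locallyIntegrableOn_truncOne
    (ha.truncOne_isBigO_atTop (by linarith [le_max_left σ s.re]))
    (by linarith [le_max_right σ s.re]) (truncOne_isBigO_nhdsGT a _) (by linarith)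

lemma boundedVert_mellin_truncOne (ha : MellinTail σ a) : BoundedVert (mellin (truncOne a)) := by
  intro x y
  refine ⟨_, fun s _ hs => norm_mellin_le_of_forall_norm_cpow_le
    (ha.mellinConvergent_truncOne (y : ℂ)) fun t ht hat => ?_⟩
  rw [norm_cpow_eq_rpow_re_of_pos ht, norm_cpow_eq_rpow_re_of_pos ht]
  exact Real.rpow_le_rpow_of_exponent_le (le_of_lt (mem_of_indicator_ne_zero hat))
    (by simpa using hs)

end MellinTail

lemma norm_mellin_indicator_Ioc_le {f : ℝ → ℂ} {x : ℝ}
    (hx : MellinConvergent (indicator (Ioc 0 1) f) x) :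
    ∃ M : ℝ, ∀ s : ℂ, x ≤ s.re → ‖mellin (indicator (Ioc 0 1) f) s‖ ≤ M := by
  refine ⟨_, fun s hs => norm_mellin_le_of_forall_norm_cpow_le hx fun t ht hft => ?_⟩
  rw [norm_cpow_eq_rpow_re_of_pos ht, norm_cpow_eq_rpow_re_of_pos ht]
  exact Real.rpow_le_rpow_of_exponent_ge ht (mem_of_indicator_ne_zero hft).2 (by simpa using hs)

section HeckeInversion

/-- The transformation law `A(t) = ε t^(-k) B(1/t)` on `(0, ∞)`. -/
def HeckeInversion (k ε : ℂ) (A B : ℝ → ℂ) : Prop :=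
  ∀ t : ℝ, 0 < t → A t = ε * (t : ℂ) ^ (-k) * B t⁻¹

/-- The failure of the transformation law `HeckeInversion k ε A B`. -/
def heckeDefect (k ε : ℂ) (A B : ℝ → ℂ) (t : ℝ) : ℂ := A t - ε * (t : ℂ) ^ (-k) * B t⁻¹

/-- A finite combination of powers of `t`: the part of the expansion at `∞` that is not rapidly
decaying. -/
def powerSum {ι : Type*} [Fintype ι] (p c : ι → ℂ) (t : ℝ) : ℂ := ∑ i, c i * (t : ℂ) ^ p i

/-- The sum of polar terms that the power sums with coefficients `c` and `d` contribute to the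
Mellin transforms of two functions related by `HeckeInversion k ε`. -/
def poleCorrection {ι : Type*} [Fintype ι] (k ε : ℂ) (p c d : ι → ℂ) (s : ℂ) : ℂ :=
  ∑ i, (c i / (s + p i) + ε * d i / (k + p i - s))

/-- Riemann's splitting of the Mellin transform at `t = 1`: the integral of `a` over `(1, ∞)`, plus
that of `b` at the reflected point. -/
def riemannSplit (k ε : ℂ) (a b : ℝ → ℂ) (s : ℂ) : ℂ :=
  mellin (truncOne a) s + ε * mellin (truncOne b) (k - s)

variable {ι : Type*} [Fintype ι] {k ε : ℂ} {p c d : ι → ℂ} {A B a b : ℝ → ℂ} {σ : ℝ}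

lemma cpow_neg_mul_ofReal_inv_cpow_neg (k : ℂ) {t : ℝ} (ht : 0 < t) :
    (t : ℂ) ^ (-k) * ((t⁻¹ : ℝ) : ℂ) ^ (-k) = 1 := by
  rw [← mul_cpow_ofReal_nonneg ht.le (inv_pos.2 ht).le, ← ofReal_mul, mul_inv_cancel₀ ht.ne',
    ofReal_one, one_cpow]

lemma heckeDefect_symm (hε : ε ≠ 0) {t : ℝ} (ht : 0 < t) :
    heckeDefect k ε A B t = -(ε * (t : ℂ) ^ (-k) * heckeDefect k ε⁻¹ B A t⁻¹) := by
  simp only [heckeDefect, inv_inv]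
  linear_combination (-A t) * cpow_neg_mul_ofReal_inv_cpow_neg k ht
    - (t : ℂ) ^ (-k) * ((t⁻¹ : ℝ) : ℂ) ^ (-k) * A t * mul_inv_cancel₀ hε

lemma heckeInversion_iff_heckeDefect :
    HeckeInversion k ε A B ↔ ∀ t : ℝ, 0 < t → heckeDefect k ε A B t = 0 := by
  simp only [HeckeInversion, heckeDefect, sub_eq_zero]

lemma heckeInversion_congr {A' B' : ℝ → ℂ} (hA : EqOn A A' (Ioi 0))
    (hB : EqOn B B' (Ioi 0)) : HeckeInversion k ε A B ↔ HeckeInversion k ε A' B' :=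
  forall₂_congr fun _ ht => by rw [hA ht, hB (inv_pos.2 ht)]

lemma heckeInversion_symm (hε : ε ≠ 0) :
    HeckeInversion k ε A B ↔ HeckeInversion k ε⁻¹ B A := by
  suffices h : ∀ {ε : ℂ} {A B : ℝ → ℂ}, ε ≠ 0 → HeckeInversion k ε A B →
      HeckeInversion k ε⁻¹ B A from
    ⟨h hε, fun h' => inv_inv ε ▸ h (inv_ne_zero hε) h'⟩
  intro ε A B hε h
  rw [heckeInversion_iff_heckeDefect] at h ⊢
  intro t ht
  rw [heckeDefect_symm (inv_ne_zero hε) ht, inv_inv, h _ (inv_pos.2 ht), mul_zero, neg_zero]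

lemma poleCorrection_symm (hε : ε ≠ 0) (s : ℂ) :
    poleCorrection k ε p c d s = ε * poleCorrection k ε⁻¹ p d c (k - s) := by
  simp only [poleCorrection, Finset.mul_sum]
  refine Finset.sum_congr rfl fun i _ => ?_
  rw [show k - s + p i = k + p i - s by ring, show k + p i - (k - s) = s + p i by ring, mul_add,
    mul_div_assoc ε⁻¹, mul_inv_cancel_left₀ hε, mul_div_assoc, add_comm]

lemma riemannSplit_symm (hε : ε ≠ 0) (s : ℂ) :
    riemannSplit k ε a b s = ε * riemannSplit k ε⁻¹ b a (k - s) := by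
  rw [riemannSplit, riemannSplit, sub_sub_cancel, mul_add, mul_inv_cancel_left₀ hε, add_comm]

lemma differentiable_riemannSplit (ha : MellinTail σ a) (hb : MellinTail σ b) :
    Differentiable ℂ (riemannSplit k ε a b) :=
  ha.differentiable_mellin_truncOne.add
    ((hb.differentiable_mellin_truncOne.comp (by fun_prop)).const_mul ε)

lemma boundedVert_riemannSplit (ha : MellinTail σ a) (hb : MellinTail σ b) :
    BoundedVert (riemannSplit k ε a b) :=
  ha.boundedVert_mellin_truncOne.add ((hb.boundedVert_mellin_truncOne.comp_const_sub k).const_mul ε)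

lemma continuousOn_heckeDefect (hA : ContinuousOn A (Ioi 0)) (hB : ContinuousOn B (Ioi 0)) :
    ContinuousOn (heckeDefect k ε A B) (Ioi 0) := by
  have hinv : ContinuousOn (fun t : ℝ => t⁻¹) (Ioi 0) := continuousOn_inv₀.mono fun t ht => ht.ne'
  have hpow : ContinuousOn (fun t : ℝ => (t : ℂ) ^ (-k)) (Ioi 0) := fun t ht =>
    (continuousAt_ofReal_cpow_const t (-k) (.inr (ne_of_gt ht))).continuousWithinAt
  have hmaps : MapsTo (fun t : ℝ => t⁻¹) (Ioi 0) (Ioi 0) := fun t ht => mem_Ioi.2 (inv_pos.2 ht)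
  exact hA.sub ((continuousOn_const.mul hpow).mul (hB.comp hinv hmaps))

lemma continuousOn_add_powerSum (ha : ContinuousOn a (Ioi 0)) :
    ContinuousOn (fun t => a t + powerSum p c t) (Ioi 0) :=
  ha.add (continuousOn_finsetSum _ fun i _ => continuousOn_const.mul fun t ht =>
    (continuousAt_ofReal_cpow_const t (p i) (.inr (ne_of_gt ht))).continuousWithinAt)

lemma indicator_heckeDefect_eq {t : ℝ} (ht : 0 < t) (ht1 : t ≠ 1) :
    indicator (Ioc 0 1)
        (heckeDefect k ε (fun t => a t + powerSum p c t) fun t => b t + powerSum p d t) t =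
      (a t - truncOne a t - ε * ((t : ℂ) ^ (-k) * truncOne b t⁻¹)) +
        ∑ i, (c i * indicator (Ioc 0 1) (fun t : ℝ => (t : ℂ) ^ p i) t -
          ε * d i * indicator (Ioc 0 1) (fun t : ℝ => (t : ℂ) ^ (-k - p i)) t) := by
  rcases ht1.lt_or_gt with h | h
  · have hmem : t ∈ Ioc (0 : ℝ) 1 := ⟨ht, h.le⟩
    have hpow : ∀ i, (t : ℂ) ^ (-k - p i) = (t : ℂ) ^ (-k) * ((t⁻¹ : ℝ) : ℂ) ^ p i := fun i => by
      rw [cpow_sub _ _ (ofReal_ne_zero.2 ht.ne'), div_eq_mul_inv, ← cpow_neg, ofReal_inv,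
        inv_cpow _ _ (by rw [arg_ofReal_of_nonneg ht.le]; exact Real.pi_pos.ne),
        cpow_neg _ (p i)]
    simp only [indicator_of_mem hmem, truncOne, indicator_of_notMem (notMem_Ioi.2 h.le),
      indicator_of_mem (mem_Ioi.2 ((one_lt_inv₀ ht).2 h)), heckeDefect, powerSum, hpow,
      Finset.sum_sub_distrib, mul_add, Finset.mul_sum]
    rw [Finset.sum_congr rfl fun i _ => mul_mul_mul_comm ε ((t : ℂ) ^ (-k)) (d i) _]
    ring
  · simp [truncOne, indicator_of_mem (mem_Ioi.2 h), h.not_ge,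
      indicator_of_notMem (notMem_Ioi.2 (inv_le_one_of_one_le₀ h.le))]

lemma hasMellin_indicator_heckeDefect (hp : ∀ i, -(p i).re ≤ σ) (hkp : ∀ i, (k + p i).re ≤ σ)
    (ha : MellinTail σ a) (hb : MellinTail σ b) {s : ℂ} (hs : σ < s.re) :
    HasMellin (indicator (Ioc 0 1)
        (heckeDefect k ε (fun t => a t + powerSum p c t) fun t => b t + powerSum p d t)) s
      (mellin a s + poleCorrection k ε p c d s - riemannSplit k ε a b s) := by
  have htrunc : HasMellin (fun t : ℝ => (t : ℂ) ^ (-k) * truncOne b t⁻¹) s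
      (mellin (truncOne b) (k - s)) :=
    hasMellin_cpow_mul (hasMellin_comp_inv
      ⟨hb.mellinConvergent_truncOne _, by rw [neg_add', sub_neg_eq_add, neg_add_eq_sub]⟩)
  have hpow : ∀ i, HasMellin (fun t : ℝ => c i * indicator (Ioc 0 1) (fun t : ℝ => (t : ℂ) ^ p i) t
      - ε * d i * indicator (Ioc 0 1) (fun t : ℝ => (t : ℂ) ^ (-k - p i)) t) s
      (c i * (1 / (s + p i)) - ε * d i * (1 / (s + (-k - p i)))) := fun i => by
    refine hasMellin_sub' (hasMellin_const_mul (hasMellin_cpow_Ioc _ ?_) _)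
      (hasMellin_const_mul (hasMellin_cpow_Ioc _ ?_) _)
    · linarith [hp i]
    · simp only [add_re, sub_re, neg_re] at hkp ⊢
      linarith [hkp i]
  have hsum := hasMellin_add' (hasMellin_sub' (hasMellin_sub' ⟨ha.mellinConvergent hs, rfl⟩
    ⟨ha.mellinConvergent_truncOne s, rfl⟩) (hasMellin_const_mul htrunc ε))
    (hasMellin_sum Finset.univ fun i _ => hpow i)
  have hval : ∀ i, c i * (1 / (s + p i)) - ε * d i * (1 / (s + (-k - p i))) =
      c i / (s + p i) + ε * d i / (k + p i - s) := fun i => by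
    rw [show s + (-k - p i) = -(k + p i - s) by ring, one_div_neg_eq_neg_one_div]
    ring
  convert hasMellin_congr_ae ?_ hsum using 1
  · simp only [hval, poleCorrection, riemannSplit]
    ring
  · filter_upwards [ae_restrict_mem measurableSet_Ioi,
      ae_restrict_of_ae (Measure.ae_ne volume (1 : ℝ))] with t ht ht1
    exact indicator_heckeDefect_eq ht ht1

lemma riemannSplit_eq_of_heckeInversion (hp : ∀ i, -(p i).re ≤ σ) (hkp : ∀ i, (k + p i).re ≤ σ)
    (ha : MellinTail σ a) (hb : MellinTail σ b)
    (h : HeckeInversion k ε (fun t => a t + powerSum p c t) fun t => b t + powerSum p d t)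
    {s : ℂ} (hs : σ < s.re) :
    riemannSplit k ε a b s = mellin a s + poleCorrection k ε p c d s := by
  have hzero : indicator (Ioc 0 1)
      (heckeDefect k ε (fun t => a t + powerSum p c t) fun t => b t + powerSum p d t) = 0 :=
    indicator_eq_zero.2 (disjoint_left.2 fun t ht ht1 =>
      ht (heckeInversion_iff_heckeDefect.1 h t ht1.1))
  have hmellin := (hasMellin_indicator_heckeDefect hp hkp ha hb (ε := ε) (c := c) (d := d) hs).2
  rw [hzero] at hmellin
  simp only [mellin, Pi.zero_apply, smul_zero, integral_zero] at hmellin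
  exact (sub_eq_zero.1 hmellin.symm).symm

/-- The Mellin transforms of the two one-sided defects are the two halves of one entire function,
`F` minus its Riemann splitting; it is bounded on two half planes and on the strip between them. -/
lemma exists_hasMellin_heckeDefect_const (hε : ε ≠ 0) (hp : ∀ i, -(p i).re ≤ σ)
    (hkp : ∀ i, (k + p i).re ≤ σ) (ha : MellinTail σ a) (hb : MellinTail σ b) {F : ℂ → ℂ}
    (hF : Differentiable ℂ F) (hFb : BoundedVert F)
    (hright : ∀ s : ℂ, σ < s.re → F s = mellin a s + poleCorrection k ε p c d s)
    (hleft : ∀ s : ℂ, σ < s.re →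
      F (k - s) = ε * (mellin b s + poleCorrection k ε⁻¹ p d c s)) :
    ∃ C, ∀ s : ℂ, σ < s.re →
      HasMellin (indicator (Ioc 0 1)
        (heckeDefect k ε (fun t => a t + powerSum p c t) fun t => b t + powerSum p d t)) s C ∧
      HasMellin (indicator (Ioc 0 1)
        (heckeDefect k ε⁻¹ (fun t => b t + powerSum p d t) fun t => a t + powerSum p c t)) s
        (ε⁻¹ * C) := by
  let H : ℂ → ℂ := fun s => F s + -1 * riemannSplit k ε a b s
  have hH₁ : ∀ s : ℂ, σ < s.re → HasMellin (indicator (Ioc 0 1) (heckeDefect k ε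
      (fun t => a t + powerSum p c t) fun t => b t + powerSum p d t)) s (H s) := fun s hs => by
    convert hasMellin_indicator_heckeDefect hp hkp ha hb hs using 1
    simp only [H, hright s hs]
    ring
  have hH₂ : ∀ s : ℂ, σ < s.re → HasMellin (indicator (Ioc 0 1) (heckeDefect k ε⁻¹
      (fun t => b t + powerSum p d t) fun t => a t + powerSum p c t)) s (ε⁻¹ * H (k - s)) :=
    fun s hs => by
      convert hasMellin_indicator_heckeDefect hp hkp hb ha hs using 1
      simp only [H, hleft s hs, riemannSplit_symm hε (k - s), sub_sub_cancel]
      field_simp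
      ring
  have hσ : σ < ((σ + 1 : ℝ) : ℂ).re := by simp
  obtain ⟨M₁, hM₁⟩ := norm_mellin_indicator_Ioc_le (hH₁ _ hσ).1
  obtain ⟨M₂, hM₂⟩ := norm_mellin_indicator_Ioc_le (hH₂ _ hσ).1
  have hHb : BoundedVert H := hFb.add ((boundedVert_riemannSplit ha hb).const_mul (-1))
  obtain ⟨C, hC⟩ := hHb.exists_eq_const (x := k.re - (σ + 1)) (y := σ + 1)
    (hF.add ((differentiable_riemannSplit ha hb).const_mul (-1)))
    ⟨‖ε‖ * M₂, fun s hs => by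
      have hs' : σ + 1 ≤ (k - s).re := by rw [sub_re]; linarith
      have h := hM₂ (k - s) hs'
      rw [(hH₂ _ (by linarith)).2, sub_sub_cancel, norm_mul, norm_inv] at h
      rwa [← inv_mul_le_iff₀ (norm_pos_iff.2 hε)]⟩
    ⟨M₁, fun s hs => (hH₁ s (by linarith)).2 ▸ hM₁ s hs⟩
  exact ⟨C, fun s hs => ⟨hC s ▸ hH₁ s hs, hC (k - s) ▸ hH₂ s hs⟩⟩

lemma heckeInversion_of_entire (hε : ε ≠ 0) (hp : ∀ i, -(p i).re ≤ σ)
    (hkp : ∀ i, (k + p i).re ≤ σ) (ha : MellinTail σ a) (hb : MellinTail σ b) {F : ℂ → ℂ}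
    (hF : Differentiable ℂ F) (hFb : BoundedVert F)
    (hright : ∀ s : ℂ, σ < s.re → F s = mellin a s + poleCorrection k ε p c d s)
    (hleft : ∀ s : ℂ, σ < s.re →
      F (k - s) = ε * (mellin b s + poleCorrection k ε⁻¹ p d c s)) :
    HeckeInversion k ε (fun t => a t + powerSum p c t) fun t => b t + powerSum p d t := by
  obtain ⟨C, hC⟩ := exists_hasMellin_heckeDefect_const hε hp hkp ha hb hF hFb hright hleft
  have hA := continuousOn_add_powerSum (p := p) (c := c) ha.continuousOn
  have hB := continuousOn_add_powerSum (p := p) (c := d) hb.continuousOn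
  have hlt : ∀ {D : ℝ → ℂ} {C : ℂ}, ContinuousOn D (Ioi 0) →
      (∀ s : ℂ, σ < s.re → HasMellin (indicator (Ioc 0 1) D) s C) →
      ∀ t ∈ Ioo (0 : ℝ) 1, D t = 0 := by
    intro D C hD hDC t ht
    have hmem : ∀ {x}, x ∈ Ioo (0 : ℝ) 1 → indicator (Ioc 0 1) D x = D x := fun hx =>
      indicator_of_mem (Ioo_subset_Ioc_self hx) D
    rw [← hmem ht]
    refine eq_zero_of_hasMellin_const hDC ht.1 ht.2.ne
      ((hD.continuousAt (Ioi_mem_nhds ht.1)).congr ?_)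
    filter_upwards [Ioo_mem_nhds ht.1 ht.2] with x hx using (hmem hx).symm
  have hcont := continuousOn_heckeDefect (k := k) (ε := ε) hA hB
  have hzero := hlt hcont fun s hs => (hC s hs).1
  have hzero' := hlt (continuousOn_heckeDefect hB hA) fun s hs => (hC s hs).2
  rw [heckeInversion_iff_heckeDefect]
  intro t ht
  rcases lt_trichotomy t 1 with h | rfl | h
  · exact hzero t ⟨ht, h⟩
  · refine tendsto_nhds_unique ((hcont.continuousAt (Ioi_mem_nhds ht)).tendsto.mono_left
      (nhdsWithin_le_nhds (s := Iio 1))) (tendsto_const_nhds.congr' ?_)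
    filter_upwards [Ioo_mem_nhdsLT (zero_lt_one (α := ℝ))] with x hx using (hzero x hx).symm
  · rw [heckeDefect_symm hε ht, hzero' _ ⟨inv_pos.2 ht, inv_lt_one_of_one_lt₀ h⟩, mul_zero,
      neg_zero]

theorem heckeInversion_iff_exists_entire (hε : ε ≠ 0) (hp : ∀ i, -(p i).re ≤ σ)
    (hkp : ∀ i, (k + p i).re ≤ σ) (ha : MellinTail σ a) (hb : MellinTail σ b) :
    HeckeInversion k ε (fun t => a t + powerSum p c t) (fun t => b t + powerSum p d t) ↔
      ∃ F : ℂ → ℂ, Differentiable ℂ F ∧ BoundedVert F ∧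
        (∀ s : ℂ, σ < s.re → F s = mellin a s + poleCorrection k ε p c d s) ∧
        ∀ s : ℂ, σ < s.re →
          F (k - s) = ε * (mellin b s + poleCorrection k ε⁻¹ p d c s) := by
  refine ⟨fun h => ⟨riemannSplit k ε a b, differentiable_riemannSplit ha hb,
    boundedVert_riemannSplit ha hb,
    fun s hs => riemannSplit_eq_of_heckeInversion hp hkp ha hb h hs, fun s hs => ?_⟩,
    fun ⟨F, hF, hFb, hright, hleft⟩ =>
      heckeInversion_of_entire hε hp hkp ha hb hF hFb hright hleft⟩
  rw [riemannSplit_symm hε, sub_sub_cancel,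
    riemannSplit_eq_of_heckeInversion hp hkp hb ha ((heckeInversion_symm hε).1 h) hs]

end HeckeInversion

/-- `Lf` and `Lg` agree for `σ < re s` with functions that continue meromorphically to `ℂ`, satisfy
the functional equation `Lf(s) = ε Lg(k - s)`, and become entire and bounded in vertical strips
after adding `corrf` and `corrg`. This is one of the two halves of `AnalyticPackage`. -/
def HeckeContinuation (k : ℤ) (σ : ℝ) (ε : ℂ) (Lf Lg corrf corrg : ℂ → ℂ) : Prop :=
  ∃ Cf Cg : ℂ → ℂ, (∀ s : ℂ, σ < s.re → Cf s = Lf s) ∧ (∀ s : ℂ, σ < s.re → Cg s = Lg s) ∧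
    (∀ s : ℂ, Cf s = ε * Cg ((k : ℂ) - s)) ∧
    EntireBddCorrected k Cf corrf ∧ EntireBddCorrected k Cg corrg

lemma heckeContinuation_iff_exists_entire {k : ℤ} {σ : ℝ} {ε : ℂ} {Lf Lg corrf corrg : ℂ → ℂ}
    (hk : (k : ℝ) ≤ σ) (hσ : 1 ≤ σ) (hε : ε ≠ 0)
    (hcorr : ∀ s, corrf s = ε * corrg (k - s)) :
    HeckeContinuation k σ ε Lf Lg corrf corrg ↔
      ∃ F : ℂ → ℂ, Differentiable ℂ F ∧ BoundedVert F ∧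
        (∀ s : ℂ, σ < s.re → F s = Lf s + corrf s) ∧
        ∀ s : ℂ, σ < s.re → F (k - s) = ε * (Lg s + corrg s) := by
  constructor
  · rintro ⟨Cf, Cg, hCf, hCg, hfe, ⟨F, hF, hFb, hFC⟩, -⟩
    refine ⟨F, hF, hFb, fun s hs => ?_, fun s hs => ?_⟩
    · rw [hFC s, hCf s hs] <;> rintro rfl <;> simp at hs <;> linarith
    · rw [hFC (k - s), hfe, hcorr, sub_sub_cancel, hCg s hs, mul_add]
      all_goals
        intro h
        have := congrArg re h
        simp at this
        linarith
  · rintro ⟨F, hF, hFb, hright, hleft⟩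
    refine ⟨fun s => F s - corrf s, fun s => ε⁻¹ * F (k - s) - corrg s, fun s hs => ?_,
      fun s hs => ?_, fun s => ?_, ⟨F, hF, hFb, fun s _ _ _ _ => (sub_add_cancel _ _).symm⟩,
      ⟨fun s => ε⁻¹ * F (k - s), (hF.comp (by fun_prop)).const_mul _,
        (hFb.comp_const_sub k).const_mul _, fun s _ _ _ _ => (sub_add_cancel _ _).symm⟩⟩
    · simp only [hright s hs, add_sub_cancel_right]
    · simp only [hleft s hs, inv_mul_cancel_left₀ hε, add_sub_cancel_right]
    · simp only [sub_sub_cancel, mul_sub, mul_inv_cancel_left₀ hε, hcorr]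

theorem heckeInversion_iff_heckeContinuation {ι : Type*} [Fintype ι] {k : ℤ} {σ : ℝ} {ε : ℂ}
    {p c d : ι → ℂ} {a b : ℝ → ℂ} {Lf Lg : ℂ → ℂ} (hk : (k : ℝ) ≤ σ) (hσ : 1 ≤ σ) (hε : ε ≠ 0)
    (hp : ∀ i, -(p i).re ≤ σ) (hkp : ∀ i, (k + p i).re ≤ σ) (ha : MellinTail σ a)
    (hb : MellinTail σ b) (haL : ∀ s : ℂ, σ < s.re → mellin a s = Lf s)
    (hbL : ∀ s : ℂ, σ < s.re → mellin b s = Lg s) :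
    HeckeInversion k ε (fun t => a t + powerSum p c t) (fun t => b t + powerSum p d t) ↔
      HeckeContinuation k σ ε Lf Lg (poleCorrection k ε p c d) (poleCorrection k ε⁻¹ p d c) := by
  rw [heckeInversion_iff_exists_entire hε hp hkp ha hb,
    heckeContinuation_iff_exists_entire hk hσ hε (poleCorrection_symm hε)]
  refine exists_congr fun F => and_congr_right' (and_congr_right' (and_congr ?_ ?_)) <;>
    refine forall₂_congr fun s hs => ?_
  · rw [haL s hs]
  · rw [hbL s hs]

/-- The cuspidal `q`-series `∑_{n ≥ 1} c(n) qⁿ`, without constant term. -/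
def qSeries (c : ℕ → ℂ) (τ : ℂ) : ℂ :=
  ∑' n : ℕ, c (n + 1) * exp (2 * Real.pi * I * (n + 1) * τ)

/-- The coefficient sequence `n ^ j * c(n)`, that of the `j`-fold `q d/dq`-derivative. -/
def natPowMul (j : ℕ) (c : ℕ → ℂ) (n : ℕ) : ℂ := (n : ℂ) ^ j * c n

/-- The restriction of `qSeries` to the imaginary axis, in the coordinate `x = 2πv` for which the
`n`-th term is `c(n) e^(-nx)`. -/
def axisSeries (c : ℕ → ℂ) (x : ℝ) : ℂ := qSeries c (I * (x / (2 * Real.pi) : ℝ))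

lemma natPowMul_natPowMul (i j : ℕ) (c : ℕ → ℂ) :
    natPowMul i (natPowMul j c) = natPowMul (i + j) c := by
  funext n
  simp only [natPowMul, pow_add, mul_assoc]

lemma LSer_natPowMul (j : ℕ) (c : ℕ → ℂ) (s : ℂ) : LSer (natPowMul j c) (s + j) = LSer c s := by
  refine tsum_congr fun n => ?_
  have hn : ((n : ℂ) + 1) ≠ 0 := n.cast_add_one_ne_zero
  rw [natPowMul, cpow_add _ _ hn, cpow_natCast, Nat.cast_succ]
  field_simp

lemma I_mul_ofReal_mem_UHP {v : ℝ} : I * (v : ℂ) ∈ UHP ↔ 0 < v := by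
  rw [UHP, mem_ofPred_eq, I_mul_im, ofReal_re]

lemma real_exp_neg_le_rpow {β x : ℝ} (hβ : 0 < β) (hx : 0 < x) :
    Real.exp (-x) ≤ β ^ β * x ^ (-β) := by
  have h : (x / β) ^ β ≤ Real.exp x := calc
    (x / β) ^ β ≤ Real.exp (x / β) ^ β := by
      gcongr
      linarith [Real.add_one_le_exp (x / β)]
    _ = Real.exp x := by rw [← Real.exp_mul, div_mul_cancel₀ _ hβ.ne']
  rw [Real.exp_neg, Real.rpow_neg hx.le, ← div_eq_mul_inv, ← inv_div, ← Real.div_rpow hx.le hβ.le]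
  exact inv_anti₀ (by positivity) h

lemma norm_exp_two_pi_I_mul (n : ℕ) (τ : ℂ) :
    ‖exp (2 * Real.pi * I * (n + 1) * τ)‖ = Real.exp (-(2 * Real.pi * (n + 1) * τ.im)) := by
  rw [norm_exp, show 2 * Real.pi * I * (n + 1) * τ = (2 * Real.pi * (n + 1) : ℝ) * (I * τ) by
    push_cast; ring, re_ofReal_mul, I_mul_re, mul_neg]

lemma summable_nat_add_one_rpow {x : ℝ} (hx : x < -1) : Summable fun n : ℕ => ((n : ℝ) + 1) ^ x :=
  mod_cast (summable_nat_add_iff 1).2 (Real.summable_nat_rpow.2 hx)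

namespace CoeffBound

variable {α : ℝ} {c : ℕ → ℂ}

lemma pow_mul (h : CoeffBound α c) (j : ℕ) : CoeffBound (α + j) (natPowMul j c) := by
  obtain ⟨C, hC⟩ := h
  refine ⟨C, fun n hn => ?_⟩
  have hn' : (0 : ℝ) < n := by exact_mod_cast hn
  rw [natPowMul, norm_mul, norm_pow, norm_natCast, Real.rpow_add hn', Real.rpow_natCast,
    ← mul_assoc, mul_comm]
  gcongr
  exact hC n hn

lemma exists_norm_qSeries_term_le (h : CoeffBound α c) {β : ℝ} (hβ : 0 < β) :
    ∃ C : ℝ, ∀ τ ∈ UHP, ∀ n : ℕ, ‖c (n + 1) * exp (2 * Real.pi * I * (n + 1) * τ)‖ ≤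
      C * ((n : ℝ) + 1) ^ (α - β) * τ.im ^ (-β) := by
  obtain ⟨C, hC⟩ := h
  refine ⟨C * (β ^ β * (2 * Real.pi) ^ (-β)), fun τ (hτ : 0 < τ.im) n => ?_⟩
  have hn : (0 : ℝ) < (n : ℝ) + 1 := by positivity
  have hcn := hC (n + 1) n.succ_pos
  rw [Nat.cast_succ] at hcn
  rw [norm_mul, norm_exp_two_pi_I_mul]
  calc ‖c (n + 1)‖ * Real.exp (-(2 * Real.pi * (n + 1) * τ.im))
      ≤ C * ((n : ℝ) + 1) ^ α * (β ^ β * (2 * Real.pi * (n + 1) * τ.im) ^ (-β)) :=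
        mul_le_mul hcn (real_exp_neg_le_rpow hβ (by positivity)) (by positivity)
          ((norm_nonneg _).trans hcn)
    _ = _ := by
        rw [Real.mul_rpow (by positivity) hτ.le, Real.mul_rpow (by positivity) hn.le,
          sub_eq_add_neg, Real.rpow_add hn]
        ring

lemma summable_qSeries (h : CoeffBound α c) {τ : ℂ} (hτ : τ ∈ UHP) :
    Summable fun n : ℕ => c (n + 1) * exp (2 * Real.pi * I * (n + 1) * τ) := by
  obtain ⟨C, hC⟩ := h.exists_norm_qSeries_term_le (β := |α| + 2) (by positivity)
  exact Summable.of_norm_bounded (((summable_nat_add_one_rpow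
    (by linarith [le_abs_self α])).mul_left C).mul_right _) (hC τ hτ)

lemma exists_norm_qSeries_le (h : CoeffBound α c) {β : ℝ} (hβ : 0 < β) (hαβ : α + 1 < β) :
    ∃ C : ℝ, ∀ τ ∈ UHP, ‖qSeries c τ‖ ≤ C * τ.im ^ (-β) := by
  obtain ⟨C, hC⟩ := h.exists_norm_qSeries_term_le hβ
  refine ⟨C * ∑' n : ℕ, ((n : ℝ) + 1) ^ (α - β), fun τ hτ => ?_⟩
  rw [← tsum_mul_left, ← tsum_mul_right]
  exact tsum_of_norm_bounded (((summable_nat_add_one_rpow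
    (by linarith)).mul_left C).mul_right _).hasSum (hC τ hτ)

lemma hasDerivAt_qSeries (h : CoeffBound α c) {τ : ℂ} (hτ : τ ∈ UHP) :
    HasDerivAt (qSeries c) (2 * Real.pi * I * qSeries (natPowMul 1 c) τ) τ := by
  obtain ⟨C, hC⟩ := (h.pow_mul 1).exists_norm_qSeries_term_le (β := |α| + 3) (by positivity)
  have hτ' : 0 < τ.im := hτ
  have hmem : τ ∈ {z : ℂ | τ.im / 2 < z.im} := half_lt_self hτ'
  have hsum := (((summable_nat_add_one_rpow (x := α + (1 : ℕ) - (|α| + 3))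
    (by push_cast; linarith [le_abs_self α])).mul_left |C|).mul_right
      ((τ.im / 2) ^ (-(|α| + 3)))).mul_left ‖2 * Real.pi * I‖
  have hderiv := hasDerivAt_tsum_of_isPreconnected (𝕜 := ℂ)
    (g := fun (n : ℕ) (z : ℂ) => c (n + 1) * exp (2 * Real.pi * I * (n + 1) * z))
    (g' := fun (n : ℕ) (z : ℂ) => 2 * Real.pi * I *
      (natPowMul 1 c (n + 1) * exp (2 * Real.pi * I * (n + 1) * z)))
    hsum (isOpen_lt continuous_const continuous_im)
    (convex_halfSpace_im_gt _).isPreconnected (fun n z _ => ?_) (fun n z hz => ?_) hmem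
    (h.summable_qSeries hτ) hmem
  · rwa [tsum_mul_left] at hderiv
  · refine (((hasDerivAt_id z).const_mul (2 * Real.pi * I * (n + 1))).cexp.const_mul
      (c (n + 1))).congr_deriv ?_
    simp only [natPowMul, id_eq]
    push_cast
    ring
  · have hz' : τ.im / 2 < z.im := hz
    rw [norm_mul]
    gcongr ‖2 * Real.pi * I‖ * ?_
    refine (hC z ((half_pos hτ').trans hz') n).trans ?_
    exact mul_le_mul (by gcongr; exact le_abs_self C)
      (Real.rpow_le_rpow_of_nonpos (half_pos hτ') hz'.le (by linarith [abs_nonneg α]))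
      (Real.rpow_nonneg (by linarith) _) (by positivity)

lemma hasSum_axisSeries (h : CoeffBound α c) {x : ℝ} (hx : 0 < x) :
    HasSum (fun n : ℕ => c (n + 1) * Real.exp (-((n : ℝ) + 1) * x)) (axisSeries c x) := by
  convert (h.summable_qSeries
    (I_mul_ofReal_mem_UHP.2 (div_pos hx Real.two_pi_pos))).hasSum using 2 with n
  · rw [ofReal_exp]
    congr 2
    have hpi : (Real.pi : ℂ) ≠ 0 := ofReal_ne_zero.2 Real.pi_ne_zero
    push_cast
    field_simp
    rw [I_sq]
    ring
  · rfl

lemma mellinTail_axisSeries (h : CoeffBound α c) (hα : -1 ≤ α) :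
    MellinTail (α + 1) (axisSeries c) := by
  have hmem : ∀ t ∈ Ioi (0 : ℝ), I * (t / (2 * Real.pi) : ℝ) ∈ UHP := fun t ht =>
    I_mul_ofReal_mem_UHP.2 (div_pos ht Real.two_pi_pos)
  refine ⟨fun t ht => ?_, fun β hβ => ?_⟩
  · have hcont : ContinuousAt (fun t : ℝ => I * ((t / (2 * Real.pi) : ℝ) : ℂ)) t := by fun_prop
    exact (ContinuousAt.comp (f := fun t : ℝ => I * ((t / (2 * Real.pi) : ℝ) : ℂ))
      (h.hasDerivAt_qSeries (hmem t ht)).continuousAt hcont).continuousWithinAt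
  · obtain ⟨C, hC⟩ := h.exists_norm_qSeries_le (by linarith) hβ
    refine IsBigO.of_bound (C * (2 * Real.pi) ^ β) (eventually_principal.2 fun t ht => ?_)
    refine (hC _ (hmem t ht)).trans_eq ?_
    rw [I_mul_im, ofReal_re, Real.div_rpow (le_of_lt ht) Real.two_pi_pos.le,
      Real.rpow_neg Real.two_pi_pos.le, div_inv_eq_mul,
      Real.norm_of_nonneg (Real.rpow_nonneg (le_of_lt ht) _)]
    ring

lemma hasMellin_axisSeries (h : CoeffBound α c) (hα : -1 ≤ α) {s : ℂ} (hs : α + 1 < s.re) :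
    HasMellin (axisSeries c) s (Gamma s * LSer c s) := by
  refine ⟨(h.mellinTail_axisSeries hα).mellinConvergent hs, ?_⟩
  have hsum : Summable fun n : ℕ => ‖c (n + 1)‖ / ((n : ℝ) + 1) ^ s.re := by
    obtain ⟨C, hC⟩ := h
    refine ((summable_nat_add_one_rpow (x := α - s.re) (by linarith)).mul_left C).of_nonneg_of_le
      (fun n => by positivity) fun n => ?_
    have hn : (0 : ℝ) < (n : ℝ) + 1 := by positivity
    rw [Real.rpow_sub hn, ← mul_div_assoc]
    gcongr
    exact_mod_cast hC (n + 1) n.succ_pos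
  rw [← (hasSum_mellin (p := fun n : ℕ => (n : ℝ) + 1) (fun n => .inr (by positivity))
    (by linarith) (fun t ht => h.hasSum_axisSeries ht) hsum).tsum_eq, LSer, ← tsum_mul_left]
  refine tsum_congr fun n => ?_
  push_cast
  ring

end CoeffBound

lemma MellinTail.pow_mul {σ : ℝ} {a : ℝ → ℂ} (j : ℕ) (ha : MellinTail (σ + j) a) :
    MellinTail σ fun t => (t : ℂ) ^ j * a t := by
  refine ⟨ContinuousOn.mul (by fun_prop) ha.1, fun β hβ => ?_⟩
  have hpow : (fun t : ℝ => (t : ℂ) ^ j) =O[𝓟 (Ioi 0)] fun t : ℝ => t ^ j :=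
    isBigO_of_le _ fun t => by rw [norm_pow, norm_pow, norm_real]
  refine (hpow.mul (ha.2 (β + j) (by linarith))).congr' .rfl
    (eventually_principal.2 fun t (ht : 0 < t) => ?_)
  beta_reduce
  rw [← Real.rpow_natCast, ← Real.rpow_add ht]
  congr 1
  ring

/-- The building block `x ^ j ∑ n ^ j c(n) e ^ (-nx)` of the expansion on the imaginary axis; its
Mellin transform `Γ(s + j) L(c, s)` involves the Dirichlet series of `c` at `s` for all `j`. -/
def axisKernel (j : ℕ) (c : ℕ → ℂ) (x : ℝ) : ℂ := (x : ℂ) ^ j * axisSeries (natPowMul j c) x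

namespace CoeffBound

variable {α : ℝ} {c : ℕ → ℂ}

lemma mellinTail_axisKernel (h : CoeffBound α c) (hα : -1 ≤ α) (j : ℕ) :
    MellinTail (α + 1) (axisKernel j c) := by
  refine MellinTail.pow_mul j ?_
  rw [add_right_comm]
  exact (h.pow_mul j).mellinTail_axisSeries (by linarith [j.cast_nonneg (α := ℝ)])

lemma hasMellin_axisKernel (h : CoeffBound α c) (hα : -1 ≤ α) (j : ℕ) {s : ℂ}
    (hs : α + 1 < s.re) : HasMellin (axisKernel j c) s (Gamma (s + j) * LSer c s) := by
  have hmellin := (h.pow_mul j).hasMellin_axisSeries (s := s + j)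
    (by linarith [j.cast_nonneg (α := ℝ)]) (by rw [add_re, natCast_re]; linarith)
  rw [LSer_natPowMul] at hmellin
  have hpow := hasMellin_cpow_mul hmellin
  simp only [cpow_natCast] at hpow
  exact hpow

end CoeffBound

section IncompleteGamma

lemma hasDerivAt_sum_pow_div_factorial (K : ℕ) (x : ℝ) :
    HasDerivAt (fun t : ℝ => ∑ j ∈ Finset.range (K + 1), t ^ j / (j.factorial : ℝ))
      (∑ j ∈ Finset.range K, x ^ j / (j.factorial : ℝ)) x := by
  refine (HasDerivAt.fun_sum fun j _ =>
    (hasDerivAt_pow j x).div_const (j.factorial : ℝ)).congr_deriv ?_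
  rw [Finset.sum_range_succ', Nat.cast_zero, zero_mul, zero_div, add_zero]
  refine Finset.sum_congr rfl fun j _ => ?_
  rw [Nat.factorial_succ, Nat.cast_mul, mul_div_mul_left _ _ (Nat.cast_ne_zero.2 j.succ_ne_zero),
    Nat.add_sub_cancel]

lemma tendsto_exp_neg_mul_sum_pow_div_factorial (K : ℕ) :
    Tendsto (fun t : ℝ => Real.exp (-t) *
      ∑ j ∈ Finset.range (K + 1), t ^ j / (j.factorial : ℝ)) atTop (𝓝 0) := by
  have h := tendsto_finsetSum (Finset.range (K + 1)) fun j _ =>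
    (Real.tendsto_pow_mul_exp_neg_atTop_nhds_zero j).div_const (j.factorial : ℝ)
  simp only [zero_div, Finset.sum_const_zero] at h
  refine h.congr fun t => ?_
  rw [Finset.mul_sum]
  exact Finset.sum_congr rfl fun j _ => by ring

lemma incGamma_natCast_add_one (K : ℕ) {x : ℝ} (hx : 0 ≤ x) :
    incGamma (K + 1) x = K.factorial *
      (Real.exp (-x) * ∑ j ∈ Finset.range (K + 1), x ^ j / (j.factorial : ℝ)) := by
  have hderiv : ∀ t ∈ Ici x, HasDerivAt (fun t : ℝ => -(K.factorial * (Real.exp (-t) *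
      ∑ j ∈ Finset.range (K + 1), t ^ j / (j.factorial : ℝ))))
      (Real.exp (-t) * t ^ ((K : ℝ) + 1 - 1)) t := fun t _ => by
    refine (((hasDerivAt_neg t).exp.mul
      (hasDerivAt_sum_pow_div_factorial K t)).const_mul (K.factorial : ℝ)).neg.congr_deriv ?_
    have hK : (K.factorial : ℝ) ≠ 0 := Nat.cast_ne_zero.2 K.factorial_ne_zero
    rw [Finset.sum_range_succ, add_sub_cancel_right, Real.rpow_natCast]
    field_simp
    ring
  have hint : IntegrableOn (fun t : ℝ => Real.exp (-t) * t ^ ((K : ℝ) + 1 - 1)) (Ioi x) :=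
    (Real.GammaIntegral_convergent K.cast_add_one_pos).mono_set (Ioi_subset_Ioi hx)
  have hlim := ((tendsto_exp_neg_mul_sum_pow_div_factorial K).const_mul (K.factorial : ℝ)).neg
  rw [incGamma, integral_Ioi_of_hasDerivAt_of_tendsto' hderiv hint hlim]
  ring

lemma incGamma_two_mul_mul_exp (K : ℕ) {x : ℝ} (hx : 0 ≤ x) :
    incGamma (K + 1) (2 * x) * Real.exp x =
      ∑ j ∈ Finset.range (K + 1), K.factorial * 2 ^ j / j.factorial * (Real.exp (-x) * x ^ j) := by
  have hexp : Real.exp (-(2 * x)) * Real.exp x = Real.exp (-x) := by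
    rw [← Real.exp_add]
    ring_nf
  rw [incGamma_natCast_add_one K (by positivity), ← hexp, Finset.mul_sum, Finset.mul_sum,
    Finset.sum_mul]
  exact Finset.sum_congr rfl fun j _ => by ring

lemma Wnu_natCast_add_one (K : ℕ) {s : ℂ} (hs : 0 < s.re) :
    Wnu (K + 1) s =
      ∑ j ∈ Finset.range (K + 1), (K.factorial * 2 ^ j / j.factorial : ℂ) * Gamma (s + j) := by
  have hre : ∀ j : ℕ, 0 < (s + j).re := fun j => by
    rw [add_re, natCast_re]
    positivity
  have hterm : ∀ x ∈ Ioi (0 : ℝ),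
      ((incGamma (K + 1) (2 * x) * Real.exp x : ℝ) : ℂ) * (x : ℂ) ^ (s - 1) =
        ∑ j ∈ Finset.range (K + 1), (K.factorial * 2 ^ j / j.factorial : ℂ) *
          ((Real.exp (-x) : ℂ) * (x : ℂ) ^ (s + j - 1)) := fun x (hx : 0 < x) => by
    rw [incGamma_two_mul_mul_exp K hx.le, ofReal_sum, Finset.sum_mul]
    refine Finset.sum_congr rfl fun j _ => ?_
    rw [add_sub_right_comm, cpow_add _ _ (ofReal_ne_zero.2 hx.ne'), cpow_natCast]
    push_cast
    ring
  rw [Wnu, setIntegral_congr_fun measurableSet_Ioi hterm,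
    integral_finsetSum _ fun j _ => (GammaIntegral_convergent (hre j)).const_mul _]
  exact Finset.sum_congr rfl fun j _ => by rw [integral_const_mul, Gamma_eq_integral (hre j)]; rfl

end IncompleteGamma

/-- The nonholomorphic series `∑_{n ≥ 1} c(n) Γ(K + 1, 4πnv) q⁻ⁿ`, with the incomplete gamma
function of integral parameter expanded into a finite sum; see `hasSum_nonholPart`. -/
def nonholPart (K : ℕ) (c : ℕ → ℂ) (τ : ℂ) : ℂ :=
  ∑ j ∈ Finset.range (K + 1), (K.factorial / j.factorial : ℂ) *
    ((4 * Real.pi * τ.im) ^ j * qSeries (natPowMul j c) (-conj τ))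

lemma neg_conj_mem_UHP {τ : ℂ} (hτ : τ ∈ UHP) : -conj τ ∈ UHP := by
  simpa only [UHP, mem_ofPred_eq, neg_im, conj_im, neg_neg] using hτ

lemma exp_two_pi_I_mul_neg_conj (n : ℕ) (τ : ℂ) :
    exp (2 * Real.pi * I * (n + 1) * -conj τ) =
      Real.exp (-(4 * Real.pi * (n + 1) * τ.im)) * exp (-(2 * Real.pi * I * (n + 1) * τ)) := by
  have hconj : -conj τ = 2 * τ.im * I - τ := by
    linear_combination (norm := (push_cast; ring)) -add_conj τ - 2 * re_add_im τ
  rw [hconj, ofReal_exp, ← exp_add]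
  congr 1
  push_cast
  linear_combination 4 * Real.pi * (n + 1) * τ.im * I_mul_I

lemma hasSum_nonholPart {α : ℝ} {c : ℕ → ℂ} (h : CoeffBound α c) (K : ℕ) {τ : ℂ} (hτ : τ ∈ UHP) :
    HasSum (fun n : ℕ => c (n + 1) * (incGamma (K + 1) (4 * Real.pi * (n + 1) * τ.im) : ℂ) *
      exp (-(2 * Real.pi * I * (n + 1) * τ))) (nonholPart K c τ) := by
  have hτ' : 0 < τ.im := hτ
  refine (hasSum_sum fun j _ => (((h.pow_mul j).summable_qSeries
    (neg_conj_mem_UHP hτ)).hasSum.mul_left ((4 * Real.pi * τ.im : ℂ) ^ j)).mul_left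
      (K.factorial / j.factorial : ℂ)).congr_fun fun n => ?_
  rw [incGamma_natCast_add_one K (by positivity), exp_two_pi_I_mul_neg_conj]
  push_cast
  rw [Finset.mul_sum, Finset.mul_sum, Finset.mul_sum, Finset.sum_mul]
  refine Finset.sum_congr rfl fun j _ => ?_
  rw [natPowMul, Nat.cast_succ, mul_right_comm (4 * Real.pi : ℂ), mul_pow _ ((n : ℂ) + 1)]
  ring

/-- The part of a weight `-K` Maass series without its two constant-term contributions. -/
def maassTail (K : ℕ) (cp cm : ℕ → ℂ) (τ : ℂ) : ℂ := qSeries cp τ + nonholPart K cm τ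

lemma maassSeries_neg_natCast {α : ℝ} {cp cm : ℕ → ℂ} (hp : CoeffBound α cp)
    (hm : CoeffBound α cm) (K : ℕ) {τ : ℂ} (hτ : τ ∈ UHP) :
    maassSeries (-K) cp cm τ =
      cp 0 + cm 0 * (τ.im : ℂ) ^ (K + 1) + maassTail K cp cm τ := by
  have hsum : Summable fun n : ℕ => cp n * exp (2 * Real.pi * I * n * τ) := by
    rw [← summable_nat_add_iff 1]
    simpa only [Nat.cast_succ] using hp.summable_qSeries hτ
  have hk : (1 - -(K : ℤ)) = ((K + 1 : ℕ) : ℤ) := by push_cast; ring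
  rw [maassSeries, hsum.tsum_eq_zero_add, hk, zpow_natCast]
  simp only [Int.cast_natCast, Nat.cast_succ, Nat.cast_zero, mul_zero, zero_mul, exp_zero, mul_one,
    Int.cast_add, Int.cast_one]
  rw [(hasSum_nonholPart hm K hτ).tsum_eq, maassTail, qSeries]
  ring

lemma CoeffBound.neg {α : ℝ} {c : ℕ → ℂ} (h : CoeffBound α c) : CoeffBound α (-c) := by
  simpa only [CoeffBound, Pi.neg_apply, norm_neg] using h

lemma LSer_neg (c : ℕ → ℂ) (s : ℂ) : LSer (-c) s = -LSer c s := by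
  simp only [LSer, Pi.neg_apply, neg_div, tsum_neg]

/-- The restriction of `maassTail` to the imaginary axis, in the coordinate `x = 2πv`. -/
def axisTail (K : ℕ) (cp cm : ℕ → ℂ) (x : ℝ) : ℂ := maassTail K cp cm (I * (x / (2 * Real.pi) : ℝ))

/-- The restriction to the imaginary axis, in the coordinate `x = 2πv`, of
`2τ ∂F/∂u - K F` for `F = maassTail K cp cm`. -/
def axisEulerTail (K : ℕ) (cp cm : ℕ → ℂ) (x : ℝ) : ℂ :=
  -2 * (x * axisTail K (natPowMul 1 cp) (-natPowMul 1 cm) x) + (-K) * axisTail K cp cm x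

lemma axisTail_eq (K : ℕ) (cp cm : ℕ → ℂ) (x : ℝ) :
    axisTail K cp cm x = axisSeries cp x +
      ∑ j ∈ Finset.range (K + 1), (K.factorial * 2 ^ j / j.factorial : ℂ) * axisKernel j cm x := by
  have hconj : -conj (I * (x / (2 * Real.pi) : ℝ)) = I * (x / (2 * Real.pi) : ℝ) := by
    rw [map_mul, conj_I, conj_ofReal, neg_mul, neg_neg]
  have him : 4 * Real.pi * ((I * (x / (2 * Real.pi) : ℝ)).im : ℂ) = 2 * x := by
    rw [I_mul_im, ofReal_re]
    push_cast
    field_simp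
    ring
  rw [axisTail, maassTail, nonholPart, hconj, him]
  refine congrArg₂ _ rfl (Finset.sum_congr rfl fun j _ => ?_)
  rw [axisKernel, axisSeries]
  ring

section

variable {α : ℝ} {cp cm : ℕ → ℂ}

lemma mellinTail_axisTail (hα : -1 ≤ α) (hp : CoeffBound α cp) (hm : CoeffBound α cm) (K : ℕ) :
    MellinTail (α + 1) (axisTail K cp cm) := by
  simp only [funext (axisTail_eq K cp cm)]
  exact (hp.mellinTail_axisSeries hα).add
    (.sum _ fun j _ => (hm.mellinTail_axisKernel hα j).const_mul _)

lemma hasMellin_axisTail (hα : -1 ≤ α) (hp : CoeffBound α cp) (hm : CoeffBound α cm) (K : ℕ)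
    {s : ℂ} (hs : α + 1 < s.re) :
    HasMellin (axisTail K cp cm) s (Gamma s * LSer cp s + Wnu (K + 1) s * LSer cm s) := by
  simp only [funext (axisTail_eq K cp cm)]
  rw [Wnu_natCast_add_one K (by linarith), Finset.sum_mul]
  simp only [mul_assoc]
  exact hasMellin_add' (hp.hasMellin_axisSeries hα hs)
    (hasMellin_sum _ fun j _ => hasMellin_const_mul (hm.hasMellin_axisKernel hα j hs) _)

lemma mellinTail_mul_axisTail (hα : -1 ≤ α) (hp : CoeffBound α cp) (hm : CoeffBound α cm) (K : ℕ) :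
    MellinTail (α + 1) fun x => x * axisTail K (natPowMul 1 cp) (-natPowMul 1 cm) x := by
  have h := mellinTail_axisTail (by push_cast; linarith) (hp.pow_mul 1) (hm.pow_mul 1).neg K
  rw [add_right_comm] at h
  simpa only [pow_one] using h.pow_mul 1

lemma hasMellin_mul_axisTail (hα : -1 ≤ α) (hp : CoeffBound α cp) (hm : CoeffBound α cm) (K : ℕ)
    {s : ℂ} (hs : α + 1 < s.re) :
    HasMellin (fun x => x * axisTail K (natPowMul 1 cp) (-natPowMul 1 cm) x) s
      (Gamma (s + 1) * LSer cp s - Wnu (K + 1) (s + 1) * LSer cm s) := by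
  have h := hasMellin_axisTail (by push_cast; linarith) (hp.pow_mul 1) (hm.pow_mul 1).neg K
    (s := s + (1 : ℕ)) (by push_cast; rw [add_re, one_re]; linarith)
  rw [LSer_neg, LSer_natPowMul, LSer_natPowMul, mul_neg, ← sub_eq_add_neg, Nat.cast_one] at h
  simpa only [cpow_one] using hasMellin_cpow_mul h

lemma mellinTail_axisEulerTail (hα : -1 ≤ α) (hp : CoeffBound α cp) (hm : CoeffBound α cm)
    (K : ℕ) : MellinTail (α + 1) (axisEulerTail K cp cm) :=
  ((mellinTail_mul_axisTail hα hp hm K).const_mul _).add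
    ((mellinTail_axisTail hα hp hm K).const_mul _)

lemma two_pi_div_sqrt_cpow_neg (N : ℕ) (s : ℂ) :
    ((2 * Real.pi / Real.sqrt N : ℝ) : ℂ) ^ (-s) =
      (((1 : ℕ) * Real.sqrt N / (2 * Real.pi) : ℝ) : ℂ) ^ s := by
  rw [Nat.cast_one, one_mul, cpow_neg, ← inv_cpow _ _ ?_, ← ofReal_inv, inv_div]
  rw [arg_ofReal_of_nonneg (by positivity)]
  exact Real.pi_pos.ne

lemma hasMellin_LambdaN (hα : -1 ≤ α) (hp : CoeffBound α cp) (hm : CoeffBound α cm) (K : ℕ)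
    {N : ℕ} (hN : 0 < N) {s : ℂ} (hs : α + 1 < s.re) :
    HasMellin (fun t => axisTail K cp cm (2 * Real.pi / Real.sqrt N * t)) s
      (LambdaN N (-K) 1 cp cm s) := by
  have h := hasMellin_comp_mul_left (y := 2 * Real.pi / Real.sqrt N) (by positivity)
    (hasMellin_axisTail hα hp hm K hs)
  rw [two_pi_div_sqrt_cpow_neg] at h
  refine ⟨h.1, h.2.trans ?_⟩
  rw [LambdaN]
  push_cast
  ring_nf

lemma hasMellin_OmegaN (hα : -1 ≤ α) (hp : CoeffBound α cp) (hm : CoeffBound α cm) (K : ℕ)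
    {N : ℕ} (hN : 0 < N) {s : ℂ} (hs : α + 1 < s.re) :
    HasMellin (fun t => axisEulerTail K cp cm (2 * Real.pi / Real.sqrt N * t)) s
      (OmegaN N (-K) 1 cp cm s) := by
  have h := hasMellin_comp_mul_left (y := 2 * Real.pi / Real.sqrt N) (by positivity)
    (hasMellin_add' (hasMellin_const_mul (hasMellin_mul_axisTail hα hp hm K hs) (-2))
      (hasMellin_const_mul (hasMellin_axisTail hα hp hm K hs) (-K)))
  rw [two_pi_div_sqrt_cpow_neg] at h
  refine ⟨h.1, h.2.trans ?_⟩
  rw [OmegaN, XiN, LambdaN]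
  push_cast
  ring_nf

end

/-- `f` is real differentiable at `τ`, with Wirtinger derivatives `∂f/∂τ = a` and
`∂f/∂τ̄ = b`. -/
def HasWirtingerDerivAt (f : ℂ → ℂ) (a b τ : ℂ) : Prop :=
  HasFDerivAt f (a • (1 : ℂ →L[ℝ] ℂ) + b • (conjCLE : ℂ →L[ℝ] ℂ)) τ

namespace HasWirtingerDerivAt

variable {f g h : ℂ → ℂ} {a b c d a' b' τ : ℂ}

lemma congr_deriv (hf : HasWirtingerDerivAt f a b τ) (ha : a = a') (hb : b = b') :
    HasWirtingerDerivAt f a' b' τ := ha ▸ hb ▸ hf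

lemma of_hasDerivAt (hf : HasDerivAt f a τ) : HasWirtingerDerivAt f a 0 τ :=
  (hf.hasFDerivAt.restrictScalars ℝ).congr_fderiv (by ext z; simp [mul_comm])

lemma differentiableAt (hf : HasWirtingerDerivAt f a 0 τ) : DifferentiableAt ℂ f τ :=
  (hasFDerivAt_of_restrictScalars ℝ (f := f) (f' := a • (1 : ℂ →L[ℂ] ℂ)) hf
    (by ext z; simp)).differentiableAt

lemma pdU_eq (hf : HasWirtingerDerivAt f a b τ) : pdU f τ = a + b := by
  rw [pdU, HasFDerivAt.fderiv hf]
  simp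

lemma add (hf : HasWirtingerDerivAt f a b τ) (hg : HasWirtingerDerivAt g c d τ) :
    HasWirtingerDerivAt (fun z => f z + g z) (a + c) (b + d) τ :=
  (HasFDerivAt.add hf hg).congr_fderiv (by module)

lemma sub (hf : HasWirtingerDerivAt f a b τ) (hg : HasWirtingerDerivAt g c d τ) :
    HasWirtingerDerivAt (fun z => f z - g z) (a - c) (b - d) τ :=
  (HasFDerivAt.sub hf hg).congr_fderiv (by module)

lemma mul (hf : HasWirtingerDerivAt f a b τ) (hg : HasWirtingerDerivAt g c d τ) :
    HasWirtingerDerivAt (fun z => f z * g z) (a * g τ + f τ * c) (b * g τ + f τ * d) τ :=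
  (HasFDerivAt.mul hf hg).congr_fderiv (by module)

lemma const_mul (c : ℂ) (hf : HasWirtingerDerivAt f a b τ) :
    HasWirtingerDerivAt (fun z => c * f z) (c * a) (c * b) τ :=
  (HasFDerivAt.const_mul hf c).congr_fderiv (by module)

lemma sum {ι : Type*} (S : Finset ι) {f : ι → ℂ → ℂ} {a b : ι → ℂ}
    (hf : ∀ i ∈ S, HasWirtingerDerivAt (f i) (a i) (b i) τ) :
    HasWirtingerDerivAt (fun z => ∑ i ∈ S, f i z) (∑ i ∈ S, a i) (∑ i ∈ S, b i) τ :=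
  (HasFDerivAt.fun_sum hf).congr_fderiv (by
    simp only [Finset.sum_add_distrib, ← Finset.sum_smul])

lemma conj_id (τ : ℂ) : HasWirtingerDerivAt (fun z => conj z) 0 1 τ :=
  (conjCLE : ℂ →L[ℝ] ℂ).hasFDerivAt.congr_fderiv (by ext z; simp)

lemma ofReal_im (τ : ℂ) : HasWirtingerDerivAt (fun z => (z.im : ℂ)) (-(I / 2)) (I / 2) τ :=
  (ofRealCLM.comp imCLM).hasFDerivAt.congr_fderiv (by
    ext z; apply Complex.ext <;> simp; ring)

lemma hasDerivAt_comp (hh : HasDerivAt h c (f τ)) (hf : HasWirtingerDerivAt f a b τ) :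
    HasWirtingerDerivAt (fun z => h (f z)) (c * a) (c * b) τ :=
  (HasFDerivAt.comp τ (hh.hasFDerivAt.restrictScalars ℝ) hf).congr_fderiv (by
    ext z; simp; ring)

lemma comp_hasDerivAt (hf : HasWirtingerDerivAt f a b (h τ)) (hh : HasDerivAt h c τ) :
    HasWirtingerDerivAt (fun z => f (h z)) (a * c) (b * conj c) τ :=
  (HasFDerivAt.comp τ hf (hh.hasFDerivAt.restrictScalars ℝ)).congr_fderiv (by
    ext z; simp; ring)

lemma comp_neg_conj (hh : HasDerivAt h c (-conj τ)) :
    HasWirtingerDerivAt (fun z => h (-conj z)) 0 (-c) τ := by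
  have hconj : HasWirtingerDerivAt (fun z => -conj z) 0 (-1) τ := by
    simpa only [neg_one_mul, mul_zero, mul_one] using (conj_id τ).const_mul (-1)
  simpa only [mul_zero, mul_neg, mul_one] using
    hasDerivAt_comp (f := fun z => -conj z) hh hconj

end HasWirtingerDerivAt

lemma isOpen_UHP : IsOpen UHP := isOpen_lt continuous_const continuous_im

lemma ne_zero_of_mem_UHP {τ : ℂ} (hτ : τ ∈ UHP) : τ ≠ 0 := by
  rintro rfl
  exact lt_irrefl (0 : ℝ) hτ

lemma eqOn_zero_UHP_of_axis {f : ℂ → ℂ} (hf : DifferentiableOn ℂ f UHP)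
    (h0 : ∀ v : ℝ, 0 < v → f (I * v) = 0) : EqOn f 0 UHP := by
  have hne : ∀ v ∈ Ioi (1 : ℝ), I * (v : ℂ) ≠ I := fun v hv h => by
    rw [mul_eq_left₀ I_ne_zero, ofReal_eq_one] at h
    exact (ne_of_gt hv) h
  have hlim : Tendsto (fun v : ℝ => I * (v : ℂ)) (𝓝[>] 1) (𝓝[≠] I) := by
    refine tendsto_nhdsWithin_iff.2 ⟨?_, eventually_nhdsWithin_of_forall hne⟩
    have hcont : Continuous fun v : ℝ => I * (v : ℂ) := by fun_prop
    simpa only [ofReal_one, mul_one] using (hcont.tendsto 1).mono_left nhdsWithin_le_nhds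
  have haxis : ∀ᶠ v : ℝ in 𝓝[>] 1, f (I * v) = 0 :=
    eventually_nhdsWithin_of_forall fun v hv => h0 v (one_pos.trans hv)
  have hfreq : ∃ᶠ z in 𝓝[≠] I, f z = 0 := hlim.frequently haxis.frequently
  exact (hf.analyticOnNhd isOpen_UHP).eqOn_zero_of_preconnected_of_frequently_eq_zero
    (convex_halfSpace_im_gt 0).isPreconnected (z₀ := I) (by simp [UHP]) hfreq

lemma HasWirtingerDerivAt.eq_of_axis_eq_zero {f : ℂ → ℂ} {a b : ℂ} {v : ℝ} (hv : 0 < v)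
    (hf : HasWirtingerDerivAt f a b (I * v)) (h0 : ∀ v : ℝ, 0 < v → f (I * v) = 0) : a = b := by
  have hline : HasDerivAt (fun t : ℝ => I * (t : ℂ)) (I * 1) v :=
    ofRealCLM.hasDerivAt.const_mul I
  have hzero : HasDerivAt (fun t : ℝ => f (I * t)) 0 v :=
    (hasDerivAt_const v (0 : ℂ)).congr_of_eventuallyEq
      (eventually_of_mem (Ioi_mem_nhds hv) fun t ht => h0 t ht)
  have heq := (HasFDerivAt.comp_hasDerivAt (f := fun t : ℝ => I * (t : ℂ)) (l := f) v hf
    hline).unique hzero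
  have heq' : (a - b) * I = 0 := by simpa [sub_mul, ← sub_eq_add_neg] using heq
  exact sub_eq_zero.1 ((mul_eq_zero.1 heq').resolve_right I_ne_zero)

/-- `f` is real differentiable on `ℍ` and its shadow `ξ_k f = 2i v^k conj(∂f/∂τ̄)` is holomorphic.
The holomorphic function `B` is normalised by `∂f/∂τ̄ = v^(-k) B(-τ̄)`, so that it takes the
same argument as `f` on the imaginary axis. -/
def HasHolomorphicShadow (k : ℤ) (f : ℂ → ℂ) : Prop :=
  ∃ B : ℂ → ℂ, DifferentiableOn ℂ B UHP ∧ ∀ τ ∈ UHP,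
    ∃ a : ℂ, HasWirtingerDerivAt f a ((τ.im : ℂ) ^ (-k) * B (-conj τ)) τ

namespace HasHolomorphicShadow

variable {k : ℤ} {f g : ℂ → ℂ}

lemma sub (hf : HasHolomorphicShadow k f) (hg : HasHolomorphicShadow k g) :
    HasHolomorphicShadow k fun τ => f τ - g τ := by
  obtain ⟨B, hB, hfB⟩ := hf
  obtain ⟨C, hC, hgC⟩ := hg
  refine ⟨fun z => B z - C z, hB.sub hC, fun τ hτ => ?_⟩
  obtain ⟨a, ha⟩ := hfB τ hτ
  obtain ⟨c, hc⟩ := hgC τ hτ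
  exact ⟨a - c, (ha.sub hc).congr_deriv rfl (by ring)⟩

lemma congr (hf : HasHolomorphicShadow k f) (hfg : EqOn g f UHP) : HasHolomorphicShadow k g := by
  obtain ⟨B, hB, hfB⟩ := hf
  refine ⟨B, hB, fun τ hτ => ?_⟩
  obtain ⟨a, ha⟩ := hfB τ hτ
  exact ⟨a, HasFDerivAt.congr_of_eventuallyEq ha
    (eventually_of_mem (isOpen_UHP.mem_nhds hτ) hfg)⟩

-- On the axis both `∂f/∂u` and `∂f/∂v` vanish, hence so do `∂f/∂τ̄` and `B`; then `f` is
-- holomorphic.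
lemma eqOn_zero_of_axis (hf : HasHolomorphicShadow k f) (h0 : ∀ v : ℝ, 0 < v → f (I * v) = 0)
    (hu : ∀ v : ℝ, 0 < v → pdU f (I * v) = 0) : EqOn f 0 UHP := by
  obtain ⟨B, hB, hfB⟩ := hf
  have hB0 : EqOn B 0 UHP := eqOn_zero_UHP_of_axis hB fun v hv => by
    obtain ⟨a, ha⟩ := hfB (I * v) (I_mul_ofReal_mem_UHP.2 hv)
    have hsum := ha.pdU_eq.symm.trans (hu v hv)
    rw [ha.eq_of_axis_eq_zero hv h0, ← two_mul, map_mul, conj_I, conj_ofReal, neg_mul, neg_neg,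
      I_mul_im, ofReal_re] at hsum
    have hv0 : (v : ℂ) ^ (-k) ≠ 0 := zpow_ne_zero _ (ofReal_ne_zero.2 hv.ne')
    exact (mul_eq_zero.1 ((mul_eq_zero.1 hsum).resolve_left two_ne_zero)).resolve_left hv0
  refine eqOn_zero_UHP_of_axis (fun τ hτ => ?_) h0
  obtain ⟨a, ha⟩ := hfB τ hτ
  rw [hB0 (neg_conj_mem_UHP hτ), Pi.zero_apply, mul_zero] at ha
  exact ha.differentiableAt.differentiableWithinAt

end HasHolomorphicShadow

section MaassSeries

variable {α : ℝ} {c cp cm : ℕ → ℂ} {τ : ℂ}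

lemma nonholPart_neg (K : ℕ) (c : ℕ → ℂ) (τ : ℂ) : nonholPart K (-c) τ = -nonholPart K c τ := by
  have hq : ∀ j z, qSeries (natPowMul j (-c)) z = -qSeries (natPowMul j c) z := fun j z => by
    simp only [qSeries, natPowMul, Pi.neg_apply, mul_neg, neg_mul, tsum_neg]
  simp only [nonholPart, hq, mul_neg, Finset.sum_neg_distrib]

-- Differentiating the `j`-th summand in `τ̄` yields a difference of consecutive terms of one
-- sequence, so that only its last term survives in the sum.
lemma hasWirtingerDerivAt_nonholPart (hc : CoeffBound α c) (K : ℕ) (hτ : τ ∈ UHP) :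
    HasWirtingerDerivAt (nonholPart K c)
      (2 * Real.pi * I * nonholPart K (-natPowMul 1 c) τ +
        2 * Real.pi * I * (4 * Real.pi * τ.im) ^ K * qSeries (natPowMul (K + 1) c) (-conj τ))
      (-(2 * Real.pi * I * (4 * Real.pi * τ.im) ^ K * qSeries (natPowMul (K + 1) c) (-conj τ)))
      τ := by
  set x : ℂ := 4 * Real.pi * τ.im
  set Q : ℕ → ℂ := fun j => qSeries (natPowMul j c) (-conj τ)
  set G : ℕ → ℂ := fun j => K.factorial / j.factorial * (j * x ^ (j - 1) * Q j) with hG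
  have hG_zero : G 0 = 0 := by simp [hG]
  have hG_succ : ∀ j, G (j + 1) = K.factorial / j.factorial * (x ^ j * Q (j + 1)) := fun j => by
    have hj : (j.factorial : ℂ) ≠ 0 := Nat.cast_ne_zero.2 j.factorial_ne_zero
    have hj' : (j : ℂ) + 1 ≠ 0 := j.cast_add_one_ne_zero
    simp only [hG, Nat.factorial_succ, Nat.add_sub_cancel]
    push_cast
    field_simp
  have hG_last : G (K + 1) = x ^ K * Q (K + 1) := by
    rw [hG_succ, div_self (Nat.cast_ne_zero.2 K.factorial_ne_zero), one_mul]
  have hsum : nonholPart K (-natPowMul 1 c) τ = -∑ j ∈ Finset.range (K + 1), G (j + 1) := by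
    rw [nonholPart_neg, nonholPart]
    simp only [natPowMul_natPowMul, hG_succ, Q, x]
  have hterm : ∀ j, HasWirtingerDerivAt (fun z : ℂ => (K.factorial / j.factorial : ℂ) *
      ((4 * Real.pi * z.im) ^ j * qSeries (natPowMul j c) (-conj z)))
      (-(2 * Real.pi * I) * G j) (2 * Real.pi * I * (G j - G (j + 1))) τ := fun j => by
    have hpow := HasWirtingerDerivAt.hasDerivAt_comp (hasDerivAt_pow j x)
      ((HasWirtingerDerivAt.ofReal_im τ).const_mul (4 * Real.pi))
    have hq := HasWirtingerDerivAt.comp_neg_conj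
      ((hc.pow_mul j).hasDerivAt_qSeries (neg_conj_mem_UHP hτ))
    refine ((hpow.mul hq).const_mul _).congr_deriv (by ring) ?_
    rw [hG_succ, natPowMul_natPowMul, add_comm 1 j]
    ring
  refine (HasWirtingerDerivAt.sum (Finset.range (K + 1)) fun j _ => hterm j).congr_deriv ?_ ?_
  · rw [← Finset.mul_sum, Finset.sum_range_succ', hG_zero, hsum, Finset.sum_range_succ _ K, hG_last]
    ring
  · rw [← Finset.mul_sum, Finset.sum_range_sub', hG_zero, hG_last]
    ring

/-- The holomorphic function that determines the shadow of a weight `-K` Maass series; see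
`hasWirtingerDerivAt_maassSeries`. -/
def maassShadow (K : ℕ) (cm : ℕ → ℂ) (z : ℂ) : ℂ :=
  I / 2 * (K + 1) * cm 0 - 2 * Real.pi * I * (4 * Real.pi) ^ K * qSeries (natPowMul (K + 1) cm) z

lemma differentiableOn_maassShadow (hm : CoeffBound α cm) (K : ℕ) :
    DifferentiableOn ℂ (maassShadow K cm) UHP := fun _ hz =>
  (((hm.pow_mul (K + 1)).hasDerivAt_qSeries hz).differentiableAt.const_mul _).const_sub _
    |>.differentiableWithinAt

lemma hasWirtingerDerivAt_maassSeries (hp : CoeffBound α cp) (hm : CoeffBound α cm) (K : ℕ)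
    (hτ : τ ∈ UHP) :
    HasWirtingerDerivAt (maassSeries (-K) cp cm)
      (2 * Real.pi * I * maassTail K (natPowMul 1 cp) (-natPowMul 1 cm) τ -
        (τ.im : ℂ) ^ K * maassShadow K cm (-conj τ))
      ((τ.im : ℂ) ^ K * maassShadow K cm (-conj τ)) τ := by
  have hconst := HasWirtingerDerivAt.of_hasDerivAt (hasDerivAt_const τ (cp 0))
  have hpow := (HasWirtingerDerivAt.hasDerivAt_comp (hasDerivAt_pow (K + 1) (τ.im : ℂ))
    (.ofReal_im τ)).const_mul (cm 0)
  have htail := (HasWirtingerDerivAt.of_hasDerivAt (hp.hasDerivAt_qSeries hτ)).add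
    (hasWirtingerDerivAt_nonholPart hm K hτ)
  refine HasFDerivAt.congr_of_eventuallyEq (((hconst.add hpow).add htail).congr_deriv ?_ ?_)
    (eventually_of_mem (isOpen_UHP.mem_nhds hτ) fun z hz => maassSeries_neg_natCast hp hm K hz)
  · rw [maassTail, maassShadow, Nat.add_sub_cancel]
    push_cast
    ring
  · rw [maassShadow, Nat.add_sub_cancel]
    push_cast
    ring

lemma hasHolomorphicShadow_maassSeries (hp : CoeffBound α cp) (hm : CoeffBound α cm) (K : ℕ) :
    HasHolomorphicShadow (-K) (maassSeries (-K) cp cm) := by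
  refine ⟨maassShadow K cm, differentiableOn_maassShadow hm K, fun τ hτ => ?_⟩
  rw [neg_neg, zpow_natCast]
  exact ⟨_, hasWirtingerDerivAt_maassSeries hp hm K hτ⟩

lemma pdU_maassSeries (hp : CoeffBound α cp) (hm : CoeffBound α cm) (K : ℕ) (hτ : τ ∈ UHP) :
    pdU (maassSeries (-K) cp cm) τ =
      2 * Real.pi * I * maassTail K (natPowMul 1 cp) (-natPowMul 1 cm) τ :=
  (hasWirtingerDerivAt_maassSeries hp hm K hτ).pdU_eq.trans (sub_add_cancel _ _)

end MaassSeries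

section Fricke

variable {k : ℤ} {N : ℕ} {f g : ℂ → ℂ} {a b τ : ℂ} {t : ℝ}

lemma fricke_apply (k : ℤ) (N : ℕ) (f : ℂ → ℂ) (τ : ℂ) :
    fricke k N f τ = (N : ℂ) ^ ((k : ℂ) / 2) * (N * τ) ^ (-k) * f (-1 / (N * τ)) := by
  simp only [fricke, slash, zero_mul, neg_one_mul, zero_sub, neg_neg, zero_add, add_zero]

lemma im_neg_one_div_natCast_mul (N : ℕ) (τ : ℂ) :
    (-1 / (N * τ)).im = τ.im / (N * normSq τ) := by
  rw [← ofReal_natCast, ← div_div, ← ofReal_one, ← ofReal_neg, ← ofReal_div, div_eq_mul_inv,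
    im_ofReal_mul, inv_im]
  ring

lemma neg_one_div_natCast_mul_mem_UHP (hN : 0 < N) (hτ : τ ∈ UHP) : -1 / (N * τ) ∈ UHP := by
  have hnorm : 0 < normSq τ := normSq_pos.2 (ne_zero_of_mem_UHP hτ)
  rw [UHP, mem_ofPred_eq, im_neg_one_div_natCast_mul]
  exact div_pos hτ (by positivity)

lemma hasDerivAt_neg_one_div_natCast_mul (N : ℕ) (hτ : τ ≠ 0) :
    HasDerivAt (fun z : ℂ => -1 / (N * z)) (1 / (N * τ ^ 2)) τ := by
  have h := (hasDerivAt_inv hτ).const_mul (-1 / (N : ℂ))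
  refine (h.congr_of_eventuallyEq (.of_forall fun z => ?_)).congr_deriv ?_
  · rw [div_mul_eq_div_div, div_eq_mul_inv (-1 / (N : ℂ))]
  · field_simp

lemma hasWirtingerDerivAt_fricke (hN : 0 < N) (hτ : τ ≠ 0)
    (hf : HasWirtingerDerivAt f a b (-1 / (N * τ))) :
    HasWirtingerDerivAt (fricke k N f)
      ((N : ℂ) ^ ((k : ℂ) / 2) * (N * τ) ^ (-k) *
        (-k / τ * f (-1 / (N * τ)) + a * (1 / (N * τ ^ 2))))
      ((N : ℂ) ^ ((k : ℂ) / 2) * (N * τ) ^ (-k) * (b * conj (1 / (N * τ ^ 2)))) τ := by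
  have hN' : (N : ℂ) ≠ 0 := Nat.cast_ne_zero.2 hN.ne'
  have hNτ : (N : ℂ) * τ ≠ 0 := mul_ne_zero hN' hτ
  have hpow : HasDerivAt (fun z : ℂ => ((N : ℂ) * z) ^ (-k)) ((N * τ) ^ (-k) * (-k / τ)) τ := by
    refine ((hasDerivAt_zpow (-k) _ (.inl hNτ)).comp τ
      (hasDerivAt_const_mul (N : ℂ))).congr_deriv ?_
    rw [zpow_sub_one₀ hNτ]
    push_cast
    field_simp
  have hmul := ((HasWirtingerDerivAt.of_hasDerivAt hpow).mul
    (hf.comp_hasDerivAt (h := fun z : ℂ => -1 / (N * z))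
      (hasDerivAt_neg_one_div_natCast_mul N hτ))).const_mul
      ((N : ℂ) ^ ((k : ℂ) / 2))
  refine HasFDerivAt.congr_of_eventuallyEq (hmul.congr_deriv (by ring) (by ring))
    (.of_forall fun z => ?_)
  rw [fricke_apply, mul_assoc]

lemma HasHolomorphicShadow.fricke (hN : 0 < N) (hf : HasHolomorphicShadow k f) :
    HasHolomorphicShadow k (fricke k N f) := by
  obtain ⟨B, hB, hfB⟩ := hf
  have hN' : (N : ℂ) ≠ 0 := Nat.cast_ne_zero.2 hN.ne'
  refine ⟨fun z => (N : ℂ) ^ ((k : ℂ) / 2) * (-z) ^ k * (1 / (N * z ^ 2)) * B (-1 / (N * z)),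
    fun z hz => ?_, fun τ hτ => ?_⟩
  · have hz0 := ne_zero_of_mem_UHP hz
    have hinv : DifferentiableAt ℂ (fun z : ℂ => -1 / (N * z)) z :=
      (hasDerivAt_neg_one_div_natCast_mul N hz0).differentiableAt
    have hBw := (hB.differentiableAt
      (isOpen_UHP.mem_nhds (neg_one_div_natCast_mul_mem_UHP hN hz))).comp z hinv
    have hpow : DifferentiableAt ℂ (fun z : ℂ => (-z) ^ k) z :=
      differentiableAt_id.neg.zpow (.inl (neg_ne_zero.2 hz0))
    have hsq : DifferentiableAt ℂ (fun z : ℂ => 1 / ((N : ℂ) * z ^ 2)) z := by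
      fun_prop (disch := positivity)
    exact (((hpow.const_mul _).mul hsq).mul hBw).differentiableWithinAt
  · have hτ0 := ne_zero_of_mem_UHP hτ
    have hτ0' : conj τ ≠ 0 := (map_ne_zero _).2 hτ0
    obtain ⟨a, ha⟩ := hfB _ (neg_one_div_natCast_mul_mem_UHP hN hτ)
    refine ⟨_, (hasWirtingerDerivAt_fricke hN hτ0 ha).congr_deriv rfl ?_⟩
    have hconj : -conj (-1 / (N * τ)) = -1 / (N * -conj τ) := by
      simp only [map_div₀, map_neg, map_one, map_mul, conj_natCast, mul_neg, div_neg, neg_div]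
    have him : (N * τ) ^ (-k) * ((-1 / (N * τ)).im : ℂ) ^ (-k) =
        (τ.im : ℂ) ^ (-k) * conj τ ^ k := by
      have hinv : conj τ ^ k = (conj τ)⁻¹ ^ (-k) := by rw [inv_zpow', neg_neg]
      rw [im_neg_one_div_natCast_mul, hinv, ← mul_zpow, ← mul_zpow]
      congr 1
      push_cast
      rw [← mul_conj]
      field_simp
    have hsq : conj (1 / (N * τ ^ 2)) = 1 / (N * (-conj τ) ^ 2) := by
      simp only [map_div₀, map_one, map_mul, conj_natCast, map_pow, neg_sq]
    rw [hconj, hsq]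
    beta_reduce
    rw [neg_neg]
    linear_combination (N : ℂ) ^ ((k : ℂ) / 2) * (1 / (N * (-conj τ) ^ 2)) *
      B (-1 / (N * -conj τ)) * him

/-- The Euler-type operator `2τ ∂/∂u + k`. Along the imaginary axis the Mellin transform turns it
into `Ω_N`, and the Fricke involution maps it to its negative. -/
def eulerOp (k : ℤ) (f : ℂ → ℂ) (τ : ℂ) : ℂ := 2 * τ * pdU f τ + k * f τ

/-- The point `it/√N` of the imaginary axis; the Fricke involution acts on these points as
`t ↦ t⁻¹`. -/
def axisPoint (N : ℕ) (t : ℝ) : ℂ := I * (t / Real.sqrt N : ℝ)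

lemma axisPoint_mem_UHP (hN : 0 < N) : axisPoint N t ∈ UHP ↔ 0 < t := by
  rw [axisPoint, I_mul_ofReal_mem_UHP, div_pos_iff_of_pos_right (by positivity)]

lemma axisPoint_mul_sqrt (hN : 0 < N) (v : ℝ) : axisPoint N (v * Real.sqrt N) = I * v := by
  rw [axisPoint, mul_div_cancel_right₀ v (by positivity)]

lemma natCast_mul_axisPoint (N : ℕ) (t : ℝ) :
    (N : ℂ) * axisPoint N t = I * ((Real.sqrt N : ℝ) : ℂ) * t := by
  rw [axisPoint, ← ofReal_natCast N, mul_left_comm, ← ofReal_mul, ← mul_div_left_comm,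
    Real.div_sqrt, mul_assoc, mul_comm t, ofReal_mul]

lemma neg_one_div_natCast_mul_axisPoint (N : ℕ) (t : ℝ) :
    -1 / (N * axisPoint N t) = axisPoint N t⁻¹ := by
  rw [natCast_mul_axisPoint, mul_assoc, ← div_div, div_I, axisPoint]
  push_cast
  ring

lemma natCast_cpow_half (N : ℕ) (k : ℤ) :
    (N : ℂ) ^ ((k : ℂ) / 2) = ((Real.sqrt N : ℝ) : ℂ) ^ k := by
  rw [Real.sqrt_eq_rpow, ofReal_cpow (Nat.cast_nonneg N), ← cpow_mul_int]
  congr 1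
  push_cast
  ring

lemma natCast_cpow_half_mul_axisPoint_zpow (hN : 0 < N) (k : ℤ) (t : ℝ) :
    (N : ℂ) ^ ((k : ℂ) / 2) * (N * axisPoint N t) ^ (-k) = (I ^ k)⁻¹ * (t : ℂ) ^ (-(k : ℂ)) := by
  have hsqrt : ((Real.sqrt N : ℝ) : ℂ) ^ k ≠ 0 :=
    zpow_ne_zero _ (ofReal_ne_zero.2 (by positivity))
  rw [natCast_cpow_half, natCast_mul_axisPoint, mul_zpow, mul_zpow, ← Int.cast_neg,
    cpow_intCast, zpow_neg I, zpow_neg ((Real.sqrt N : ℝ) : ℂ)]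
  field_simp

lemma fricke_axisPoint (hN : 0 < N) (k : ℤ) (f : ℂ → ℂ) (t : ℝ) :
    fricke k N f (axisPoint N t) =
      (I ^ k)⁻¹ * (t : ℂ) ^ (-(k : ℂ)) * f (axisPoint N t⁻¹) := by
  rw [fricke_apply, neg_one_div_natCast_mul_axisPoint, natCast_cpow_half_mul_axisPoint_zpow hN]

lemma eulerOp_fricke_axisPoint (hN : 0 < N) (ht : 0 < t)
    (hf : HasWirtingerDerivAt f a b (axisPoint N t⁻¹)) :
    eulerOp k (fricke k N f) (axisPoint N t) =
      -(I ^ k)⁻¹ * (t : ℂ) ^ (-(k : ℂ)) * eulerOp k f (axisPoint N t⁻¹) := by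
  have hτ : axisPoint N t ≠ 0 := ne_zero_of_mem_UHP ((axisPoint_mem_UHP hN).2 ht)
  have hw := neg_one_div_natCast_mul_axisPoint N t
  have hreal : conj (1 / (N * axisPoint N t ^ 2)) = 1 / (N * axisPoint N t ^ 2) := by
    simp only [axisPoint, map_div₀, map_one, map_mul, map_pow, conj_natCast, conj_I, conj_ofReal,
      neg_mul, neg_sq]
  have hw' : axisPoint N t * (1 / (N * axisPoint N t ^ 2)) = -axisPoint N t⁻¹ := by
    rw [← hw]
    field_simp
  have hpdU := (hasWirtingerDerivAt_fricke (k := k) hN hτ (hw ▸ hf)).pdU_eq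
  rw [hreal, hw, natCast_cpow_half_mul_axisPoint_zpow hN] at hpdU
  rw [eulerOp, eulerOp, hpdU, hf.pdU_eq, fricke_axisPoint hN]
  set P := (I ^ k)⁻¹ * (t : ℂ) ^ (-(k : ℂ)) with hP
  have hcancel : axisPoint N t * (-k / axisPoint N t) = -k := mul_div_cancel₀ _ hτ
  rw [neg_mul, ← hP]
  linear_combination 2 * P * f (axisPoint N t⁻¹) * hcancel + 2 * P * (a + b) * hw'

lemma HasHolomorphicShadow.eqOn_of_axisPoint (hN : 0 < N) (hf : HasHolomorphicShadow k f)
    (hg : HasHolomorphicShadow k g)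
    (h0 : ∀ t : ℝ, 0 < t → f (axisPoint N t) = g (axisPoint N t))
    (hu : ∀ t : ℝ, 0 < t → eulerOp k f (axisPoint N t) = eulerOp k g (axisPoint N t)) :
    EqOn f g UHP := by
  have hsub : EqOn (fun τ => f τ - g τ) 0 UHP := by
    refine (hf.sub hg).eqOn_zero_of_axis (fun v hv => ?_) fun v hv => ?_
    all_goals
      have hvN : 0 < v * Real.sqrt N := by positivity
      have hval := h0 _ hvN
      have hder := hu _ hvN
      rw [axisPoint_mul_sqrt hN] at hval hder
    · exact sub_eq_zero.2 hval
    · obtain ⟨_, _, hfB⟩ := hf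
      obtain ⟨_, _, hgB⟩ := hg
      obtain ⟨a, ha⟩ := hfB _ (I_mul_ofReal_mem_UHP.2 hv)
      obtain ⟨c, hc⟩ := hgB _ (I_mul_ofReal_mem_UHP.2 hv)
      have hτ : 2 * (I * (v : ℂ)) ≠ 0 := by simp [hv.ne']
      rw [eulerOp, eulerOp, hval, add_left_inj, mul_right_inj' hτ, ha.pdU_eq, hc.pdU_eq] at hder
      rw [(ha.sub hc).pdU_eq]
      linear_combination hder
  exact fun τ hτ => sub_eq_zero.1 (hsub hτ)

lemma pdU_congr (h : EqOn f g UHP) (hτ : τ ∈ UHP) : pdU f τ = pdU g τ := by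
  rw [pdU, pdU, (h.eventuallyEq_of_mem (isOpen_UHP.mem_nhds hτ)).fderiv_eq]

theorem eq_fricke_iff_heckeInversion (hN : 0 < N) (hf : HasHolomorphicShadow k f)
    (hg : HasHolomorphicShadow k g) :
    (∀ τ ∈ UHP, g τ = fricke k N f τ) ↔
      HeckeInversion k (I ^ k) (fun t => f (axisPoint N t)) (fun t => g (axisPoint N t)) ∧
      HeckeInversion k (-I ^ k) (fun t => eulerOp k f (axisPoint N t))
        (fun t => eulerOp k g (axisPoint N t)) := by
  have hI : I ^ k ≠ 0 := zpow_ne_zero _ I_ne_zero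
  have heuler : ∀ t : ℝ, 0 < t → eulerOp k (fricke k N f) (axisPoint N t) =
      -(I ^ k)⁻¹ * (t : ℂ) ^ (-(k : ℂ)) * eulerOp k f (axisPoint N t⁻¹) := fun t ht => by
    obtain ⟨_, _, hfB⟩ := hf
    obtain ⟨a, ha⟩ := hfB _ ((axisPoint_mem_UHP hN).2 (inv_pos.2 ht))
    exact eulerOp_fricke_axisPoint hN ht ha
  rw [heckeInversion_symm hI, heckeInversion_symm (neg_ne_zero.2 hI), inv_neg]
  constructor
  · intro h
    refine ⟨fun t ht => ?_, fun t ht => ?_⟩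
    all_goals
      have hmem := (axisPoint_mem_UHP hN).2 ht
      beta_reduce
    · rw [h _ hmem, fricke_axisPoint hN]
    · rw [← heuler t ht, eulerOp, eulerOp, h _ hmem, pdU_congr h hmem]
  · rintro ⟨hval, hder⟩
    refine hg.eqOn_of_axisPoint hN (hf.fricke hN) (fun t ht => ?_) fun t ht => ?_
    · rw [fricke_axisPoint hN, ← hval t ht]
    · rw [heuler t ht, ← hder t ht]

end Fricke

section AxisValues

/-- The exponents of the powers of `t` contributed by the two constant terms of a harmonic Maass
Fourier expansion. -/
def constExponents (k : ℤ) : Fin 2 → ℂ := ![0, 1 - k]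

/-- The coefficients of `t ^ constExponents k` at `τ = it/√N`. -/
def constCoeffs (N : ℕ) (k : ℤ) (cp cm : ℕ → ℂ) : Fin 2 → ℂ := ![cp 0, cm 0 / Npow N k]

lemma powerSum_constExponents (N : ℕ) (k : ℤ) (cp cm : ℕ → ℂ) (t : ℝ) :
    powerSum (constExponents k) (constCoeffs N k cp cm) t =
      cp 0 + cm 0 / Npow N k * (t : ℂ) ^ (1 - k) := by
  simp only [powerSum, constExponents, constCoeffs, Fin.sum_univ_two, Matrix.cons_val_zero,
    Matrix.cons_val_one, cpow_zero, mul_one]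
  rw [← cpow_intCast]
  push_cast
  rfl

lemma powerSum_smul {ι : Type*} [Fintype ι] (z : ℂ) (p c : ι → ℂ) (t : ℝ) :
    powerSum p (z • c) t = z * powerSum p c t := by
  simp only [powerSum, Pi.smul_apply, smul_eq_mul, mul_assoc, Finset.mul_sum]

lemma poleCorrection_constCoeffs (N : ℕ) (k : ℤ) (ε : ℂ) (cp cm dp dm : ℕ → ℂ) :
    poleCorrection k ε (constExponents k) (constCoeffs N k cp cm) (constCoeffs N k dp dm) =
      corrL N k ε (cp 0) (dp 0) (cm 0) (dm 0) := by
  funext s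
  simp only [poleCorrection, corrL, constExponents, constCoeffs, Fin.sum_univ_two,
    Matrix.cons_val_zero, Matrix.cons_val_one]
  ring_nf

lemma poleCorrection_neg_smul_constCoeffs (N : ℕ) (k : ℤ) (ε : ℂ) (cp cm dp dm : ℕ → ℂ) :
    poleCorrection k (-ε) (constExponents k) ((k : ℂ) • constCoeffs N k cp cm)
        ((k : ℂ) • constCoeffs N k dp dm) =
      corrO N k ε (cp 0) (dp 0) (cm 0) (dm 0) := by
  funext s
  simp only [poleCorrection, corrO, constExponents, constCoeffs, Fin.sum_univ_two,
    Matrix.cons_val_zero, Matrix.cons_val_one, Pi.smul_apply, smul_eq_mul]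
  ring_nf

lemma Npow_eq_sqrt_zpow (N : ℕ) (k : ℤ) : Npow N k = ((Real.sqrt N : ℝ) : ℂ) ^ (1 - k) := by
  rw [← natCast_cpow_half, Npow]
  push_cast
  rfl

lemma axisPoint_eq_div_two_pi (N : ℕ) (t : ℝ) :
    axisPoint N t = I * (2 * Real.pi / Real.sqrt N * t / (2 * Real.pi) : ℝ) := by
  rw [axisPoint]
  congr 2
  field_simp

lemma analyticPackage_iff_heckeContinuation {N : ℕ} {k : ℤ} {α : ℝ} {cfp cfm cgp cgm : ℕ → ℂ} :
    AnalyticPackage N k α cfp cfm cgp cgm ↔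
      HeckeContinuation k (α + 1) (I ^ k) (LambdaN N k 1 cfp cfm) (LambdaN N k 1 cgp cgm)
        (corrL N k (I ^ k) (cfp 0) (cgp 0) (cfm 0) (cgm 0))
        (corrL N k (I ^ k)⁻¹ (cgp 0) (cfp 0) (cgm 0) (cfm 0)) ∧
      HeckeContinuation k (α + 1) (-I ^ k) (OmegaN N k 1 cfp cfm) (OmegaN N k 1 cgp cgm)
        (corrO N k (I ^ k) (cfp 0) (cgp 0) (cfm 0) (cgm 0))
        (corrO N k (I ^ k)⁻¹ (cgp 0) (cfp 0) (cgm 0) (cfm 0)) := by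
  rw [← zpow_neg]
  constructor
  · rintro ⟨Lf, Lg, Of, Og, hLf, hLg, hOf, hOg, hL, hO, hLfE, hLgE, hOfE, hOgE⟩
    exact ⟨⟨Lf, Lg, hLf, hLg, hL, hLfE, hLgE⟩, ⟨Of, Og, hOf, hOg, hO, hOfE, hOgE⟩⟩
  · rintro ⟨⟨Lf, Lg, hLf, hLg, hL, hLfE, hLgE⟩, ⟨Of, Og, hOf, hOg, hO, hOfE, hOgE⟩⟩
    exact ⟨Lf, Lg, Of, Og, hLf, hLg, hOf, hOg, hL, hO, hLfE, hLgE, hOfE, hOgE⟩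

variable {N K : ℕ} {α : ℝ} {cp cm cfp cfm cgp cgm : ℕ → ℂ} {f g : ℂ → ℂ} {ε : ℂ}

lemma FourierShape.hasHolomorphicShadow (hf : FourierShape (-K) cp cm f) (hp : CoeffBound α cp)
    (hm : CoeffBound α cm) : HasHolomorphicShadow (-K) f :=
  (hasHolomorphicShadow_maassSeries hp hm K).congr hf

lemma FourierShape.axisPoint_eq (hf : FourierShape (-K) cp cm f) (hp : CoeffBound α cp)
    (hm : CoeffBound α cm) (hN : 0 < N) :
    EqOn (fun t => f (axisPoint N t))
      (fun t => axisTail K cp cm (2 * Real.pi / Real.sqrt N * t) +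
        powerSum (constExponents (-K)) (constCoeffs N (-K) cp cm) t) (Ioi 0) := by
  intro t ht
  have hmem := (axisPoint_mem_UHP hN).2 ht
  have hexp : (1 - -K : ℤ) = (K + 1 : ℕ) := by push_cast; ring
  beta_reduce
  rw [hf _ hmem, maassSeries_neg_natCast hp hm K hmem, axisTail, ← axisPoint_eq_div_two_pi,
    powerSum_constExponents, Npow_eq_sqrt_zpow, hexp, zpow_natCast, zpow_natCast,
    axisPoint, I_mul_im, ofReal_re]
  push_cast
  ring

lemma FourierShape.eulerOp_axisPoint_eq (hf : FourierShape (-K) cp cm f) (hp : CoeffBound α cp)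
    (hm : CoeffBound α cm) (hN : 0 < N) :
    EqOn (fun t => eulerOp (-K) f (axisPoint N t))
      (fun t => axisEulerTail K cp cm (2 * Real.pi / Real.sqrt N * t) +
        powerSum (constExponents (-K)) (((-K : ℤ) : ℂ) • constCoeffs N (-K) cp cm) t)
      (Ioi 0) := by
  intro t ht
  have hmem := (axisPoint_mem_UHP hN).2 ht
  have hval : f (axisPoint N t) = _ := hf.axisPoint_eq hp hm hN ht
  have hτ : 2 * axisPoint N t * (2 * Real.pi * I) =
      -2 * ((2 * Real.pi / Real.sqrt N * t : ℝ) : ℂ) := by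
    rw [axisPoint]
    push_cast
    linear_combination 4 * Real.pi * (t / (Real.sqrt N : ℂ)) * I_sq
  beta_reduce
  rw [eulerOp, pdU_congr hf hmem, pdU_maassSeries hp hm K hmem, hval, axisEulerTail,
    powerSum_smul, axisPoint_eq_div_two_pi, ← axisTail, ← axisPoint_eq_div_two_pi]
  push_cast at hτ ⊢
  linear_combination axisTail K (natPowMul 1 cp) (-natPowMul 1 cm)
    (2 * Real.pi / Real.sqrt N * t) * hτ

lemma heckeInversion_constExponents_iff {k : ℤ} {σ : ℝ} {c d : Fin 2 → ℂ} {a b : ℝ → ℂ}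
    {Lf Lg : ℂ → ℂ} (hk : k ≤ 1) (hσ : 1 ≤ σ) (hε : ε ≠ 0) (ha : MellinTail σ a)
    (hb : MellinTail σ b) (haL : ∀ s : ℂ, σ < s.re → HasMellin a s (Lf s))
    (hbL : ∀ s : ℂ, σ < s.re → HasMellin b s (Lg s)) :
    HeckeInversion k ε (fun t => a t + powerSum (constExponents k) c t)
        (fun t => b t + powerSum (constExponents k) d t) ↔
      HeckeContinuation k σ ε Lf Lg (poleCorrection k ε (constExponents k) c d)
        (poleCorrection k ε⁻¹ (constExponents k) d c) := by
  have hk' : (k : ℝ) ≤ 1 := mod_cast hk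
  refine heckeInversion_iff_heckeContinuation (hk'.trans hσ) hσ hε ?_ ?_ ha hb
    (fun s hs => (haL s hs).2) fun s hs => (hbL s hs).2 <;>
  · simp only [constExponents, Fin.forall_fin_two, Matrix.cons_val_zero, Matrix.cons_val_one,
      zero_re, sub_re, one_re, intCast_re, add_re]
    constructor <;> linarith

lemma heckeInversion_axisPoint_iff (hα : 0 ≤ α) (hN : 0 < N) (hε : ε ≠ 0)
    (hf : FourierShape (-K) cfp cfm f) (hg : FourierShape (-K) cgp cgm g)
    (hfp : CoeffBound α cfp) (hfm : CoeffBound α cfm) (hgp : CoeffBound α cgp)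
    (hgm : CoeffBound α cgm) :
    HeckeInversion (-K : ℤ) ε (fun t => f (axisPoint N t)) (fun t => g (axisPoint N t)) ↔
      HeckeContinuation (-K) (α + 1) ε (LambdaN N (-K) 1 cfp cfm) (LambdaN N (-K) 1 cgp cgm)
        (corrL N (-K) ε (cfp 0) (cgp 0) (cfm 0) (cgm 0))
        (corrL N (-K) ε⁻¹ (cgp 0) (cfp 0) (cgm 0) (cfm 0)) := by
  have hy : 0 < 2 * Real.pi / Real.sqrt N := by positivity
  have hα' : -1 ≤ α := by linarith
  rw [heckeInversion_congr (hf.axisPoint_eq hfp hfm hN) (hg.axisPoint_eq hgp hgm hN),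
    heckeInversion_constExponents_iff (by lia) (by linarith) hε
      ((mellinTail_axisTail hα' hfp hfm K).comp_mul_left hy)
      ((mellinTail_axisTail hα' hgp hgm K).comp_mul_left hy)
      (fun s hs => hasMellin_LambdaN hα' hfp hfm K hN hs)
      (fun s hs => hasMellin_LambdaN hα' hgp hgm K hN hs),
    poleCorrection_constCoeffs, poleCorrection_constCoeffs]

lemma heckeInversion_eulerOp_axisPoint_iff (hα : 0 ≤ α) (hN : 0 < N) (hε : ε ≠ 0)
    (hf : FourierShape (-K) cfp cfm f) (hg : FourierShape (-K) cgp cgm g)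
    (hfp : CoeffBound α cfp) (hfm : CoeffBound α cfm) (hgp : CoeffBound α cgp)
    (hgm : CoeffBound α cgm) :
    HeckeInversion (-K : ℤ) (-ε) (fun t => eulerOp (-K) f (axisPoint N t))
        (fun t => eulerOp (-K) g (axisPoint N t)) ↔
      HeckeContinuation (-K) (α + 1) (-ε) (OmegaN N (-K) 1 cfp cfm) (OmegaN N (-K) 1 cgp cgm)
        (corrO N (-K) ε (cfp 0) (cgp 0) (cfm 0) (cgm 0))
        (corrO N (-K) ε⁻¹ (cgp 0) (cfp 0) (cgm 0) (cfm 0)) := by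
  have hy : 0 < 2 * Real.pi / Real.sqrt N := by positivity
  have hα' : -1 ≤ α := by linarith
  rw [heckeInversion_congr (hf.eulerOp_axisPoint_eq hfp hfm hN)
      (hg.eulerOp_axisPoint_eq hgp hgm hN),
    heckeInversion_constExponents_iff (by lia) (by linarith) (neg_ne_zero.2 hε)
      ((mellinTail_axisEulerTail hα' hfp hfm K).comp_mul_left hy)
      ((mellinTail_axisEulerTail hα' hgp hgm K).comp_mul_left hy)
      (fun s hs => hasMellin_OmegaN hα' hfp hfm K hN hs)
      (fun s hs => hasMellin_OmegaN hα' hgp hgm K hN hs),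
    inv_neg, poleCorrection_neg_smul_constCoeffs, poleCorrection_neg_smul_constCoeffs]

end AxisValues

theorem hecke_converse_theorem_general
    (k : ℤ) (hk : k ≤ 0) (N : ℕ) (hN : 1 ≤ N) (α : ℝ) (hα : 0 ≤ α)
    (cfp cfm cgp cgm : ℕ → ℂ) (f g : ℂ → ℂ)
    (hf : FourierShape k cfp cfm f) (hg : FourierShape k cgp cgm g)
    (hbfp : CoeffBound α cfp) (hbfm : CoeffBound α cfm)
    (hbgp : CoeffBound α cgp) (hbgm : CoeffBound α cgm) :
    (∀ τ ∈ UHP, g τ = fricke k N f τ) ↔ AnalyticPackage N k α cfp cfm cgp cgm := by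
  obtain ⟨K, rfl⟩ := Int.exists_eq_neg_ofNat hk
  have hI : I ^ (-K : ℤ) ≠ 0 := zpow_ne_zero _ I_ne_zero
  rw [eq_fricke_iff_heckeInversion hN (hf.hasHolomorphicShadow hbfp hbfm)
      (hg.hasHolomorphicShadow hbgp hbgm),
    analyticPackage_iff_heckeContinuation,
    heckeInversion_axisPoint_iff hα hN hI hf hg hbfp hbfm hbgp hbgm,
    heckeInversion_eulerOp_axisPoint_iff hα hN hI hf hg hbfp hbfm hbgp hbgm]

/-- **Hecke-type converse theorem** (Theorem 4.5): `g = f|_k ω(N)` iff the completed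
Dirichlet series `Λ_N, Ω_N` of `f` and `g` admit meromorphic continuation, satisfy the
functional equations, and have entire pole-corrected completions bounded on vertical
strips. -/
theorem hecke_converse_theorem
    (k : ℤ) (hk : k < 0) (N : ℕ) (hN : 1 ≤ N) (α : ℝ) (hα : 0 ≤ α)
    (cfp cfm cgp cgm : ℕ → ℂ) (f g : ℂ → ℂ)
    (hf : FourierShape k cfp cfm f) (hg : FourierShape k cgp cgm g)
    (hbfp : CoeffBound α cfp) (hbfm : CoeffBound α cfm)
    (hbgp : CoeffBound α cgp) (hbgm : CoeffBound α cgm) :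
    (∀ τ ∈ UHP, g τ = fricke k N f τ) ↔ AnalyticPackage N k α cfp cfm cgp cgm :=
  hecke_converse_theorem_general k hk.le N hN α hα cfp cfm cgp cgm f g hf hg hbfp hbfm hbgp hbgm
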